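/- arXiv:2208.05831 — 3 statements merged into one kernel-verified Lean document; each statement's English description precedes it below -/
import Mathlib

section
/- Let Θ_η = Σ_{I ∈ 𝕀} f_I H_I ∈ U. Then: (a) for every weight λ and every k with 1 ≤ k ≤ N-1, e_k Θ_η v_λ = 0 in M(λ); (b) if moreover (λ, η) = 1 - N (equivalently (λ+ρ, η) = 1), then also e_N Θ_η v_λ = 0, so that Θ_η v_λ is a vector of M(λ) annihilated by e_1, …, e_N; thus Θ_η is a Shapovalov element for the pair (η, 1). -/
noncomputable section

open FreeAlgebra

/-- `𝕜 = F(q)`, the field of rational functions over `F`. -/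
abbrev kk (F : Type) [Field F] : Type := RatFunc F

/-- The variable `q`. -/
def qq (F : Type) [Field F] : kk F := RatFunc.X

/-- `v = q²`. -/
def vv (F : Type) [Field F] : kk F := qq F ^ 2

/-- The balanced quantum integer `[n]_v`. -/
def qint (F : Type) [Field F] (n : ℤ) : kk F :=
  (vv F ^ n - vv F ^ (-n)) / (vv F - (vv F)⁻¹)

/-- The quantum factorial `[m]_v!`. -/
def qfact (F : Type) [Field F] (m : ℕ) : kk F :=
  ∏ j ∈ Finset.Icc 1 m, qint F j

/-- The balanced Gaussian binomial coefficient `C(n,i)_v`. -/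
def qbinom (F : Type) [Field F] (n i : ℕ) : kk F :=
  qfact F n / (qfact F i * qfact F (n - i))

/-- The Cartan matrix of `sl(N+1)`, with 1-based indices. -/
def cartan (i j : ℕ) : ℤ :=
  if i = j then 2 else if i + 1 = j ∨ j + 1 = i then -1 else 0

/-- Generators of `U_q(sl(N+1))`: `e i`, `f i`, `k i`, `kinv i` (0-based `i : Fin N`,
corresponding to the 1-based index `i+1`). -/
inductive Gen (N : ℕ) : Type
  | e : Fin N → Gen N
  | f : Fin N → Gen N
  | k : Fin N → Gen N
  | kinv : Fin N → Gen N

/-- The defining relations of `U_q(sl(N+1))`. -/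
inductive UqRel (F : Type) [Field F] (N : ℕ) :
    FreeAlgebra (kk F) (Gen N) → FreeAlgebra (kk F) (Gen N) → Prop
  | kkinv (i : Fin N) : UqRel F N (ι (kk F) (Gen.k i) * ι (kk F) (Gen.kinv i)) 1
  | kinvk (i : Fin N) : UqRel F N (ι (kk F) (Gen.kinv i) * ι (kk F) (Gen.k i)) 1
  | kcomm (i j : Fin N) :
      UqRel F N (ι (kk F) (Gen.k i) * ι (kk F) (Gen.k j))
        (ι (kk F) (Gen.k j) * ι (kk F) (Gen.k i))
  | ke (i j : Fin N) :
      UqRel F N (ι (kk F) (Gen.k i) * ι (kk F) (Gen.e j) * ι (kk F) (Gen.kinv i))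
        ((qq F ^ cartan ((i : ℕ) + 1) ((j : ℕ) + 1)) • ι (kk F) (Gen.e j))
  | kf (i j : Fin N) :
      UqRel F N (ι (kk F) (Gen.k i) * ι (kk F) (Gen.f j) * ι (kk F) (Gen.kinv i))
        ((qq F ^ (-cartan ((i : ℕ) + 1) ((j : ℕ) + 1))) • ι (kk F) (Gen.f j))
  | ef (i j : Fin N) :
      UqRel F N (ι (kk F) (Gen.e i) * ι (kk F) (Gen.f j) - ι (kk F) (Gen.f j) * ι (kk F) (Gen.e i))
        (if i = j then
          ((qq F ^ 2 - qq F ^ (-2 : ℤ))⁻¹) •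
            ((ι (kk F) (Gen.k i)) ^ 2 - (ι (kk F) (Gen.kinv i)) ^ 2)
        else 0)
  | serre_e_near (i j : Fin N) (h : (i : ℕ) + 1 = j ∨ (j : ℕ) + 1 = i) :
      UqRel F N
        ((ι (kk F) (Gen.e i)) ^ 2 * ι (kk F) (Gen.e j)
          - (qq F ^ 2 + qq F ^ (-2 : ℤ)) •
              (ι (kk F) (Gen.e i) * ι (kk F) (Gen.e j) * ι (kk F) (Gen.e i))
          + ι (kk F) (Gen.e j) * (ι (kk F) (Gen.e i)) ^ 2) 0
  | serre_f_near (i j : Fin N) (h : (i : ℕ) + 1 = j ∨ (j : ℕ) + 1 = i) :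
      UqRel F N
        ((ι (kk F) (Gen.f i)) ^ 2 * ι (kk F) (Gen.f j)
          - (qq F ^ 2 + qq F ^ (-2 : ℤ)) •
              (ι (kk F) (Gen.f i) * ι (kk F) (Gen.f j) * ι (kk F) (Gen.f i))
          + ι (kk F) (Gen.f j) * (ι (kk F) (Gen.f i)) ^ 2) 0
  | serre_e_far (i j : Fin N) (h : (i : ℕ) + 1 < j ∨ (j : ℕ) + 1 < i) :
      UqRel F N (ι (kk F) (Gen.e i) * ι (kk F) (Gen.e j))
        (ι (kk F) (Gen.e j) * ι (kk F) (Gen.e i))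
  | serre_f_far (i j : Fin N) (h : (i : ℕ) + 1 < j ∨ (j : ℕ) + 1 < i) :
      UqRel F N (ι (kk F) (Gen.f i) * ι (kk F) (Gen.f j))
        (ι (kk F) (Gen.f j) * ι (kk F) (Gen.f i))

/-- The quantized enveloping algebra `U = U_q(sl(N+1))`. -/
abbrev Uq (F : Type) [Field F] (N : ℕ) : Type := RingQuot (UqRel F N)

variable (F : Type) [Field F] (N : ℕ)

/-- The image of a generator in `U`. -/
def gen (g : Gen N) : Uq F N := RingQuot.mkAlgHom (kk F) (UqRel F N) (ι (kk F) g)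

/-- `e_i` (1-based index `1 ≤ i ≤ N`; junk value `0` outside this range). -/
def egen (i : ℕ) : Uq F N :=
  if h : 1 ≤ i ∧ i ≤ N then gen F N (Gen.e ⟨i - 1, by omega⟩) else 0

/-- `f_i` (1-based index). -/
def fgen (i : ℕ) : Uq F N :=
  if h : 1 ≤ i ∧ i ≤ N then gen F N (Gen.f ⟨i - 1, by omega⟩) else 0

/-- `k_i` (1-based index). -/
def kgen (i : ℕ) : Uq F N :=
  if h : 1 ≤ i ∧ i ≤ N then gen F N (Gen.k ⟨i - 1, by omega⟩) else 0

/-- `k_i⁻¹` (1-based index). -/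
def kinvgen (i : ℕ) : Uq F N :=
  if h : 1 ≤ i ∧ i ≤ N then gen F N (Gen.kinv ⟨i - 1, by omega⟩) else 0

/-- Auxiliary recursion: `fword i d = f_{i, i+1+d}`. -/
def fword (i : ℕ) : ℕ → Uq F N
  | 0 => fgen F N i
  | d + 1 =>
      qq F • (fword i d * fgen F N (i + 1 + d)) -
        (qq F)⁻¹ • (fgen F N (i + 1 + d) * fword i d)

/-- The quantum root vector `f_{i,j}` (for `1 ≤ i < j ≤ N+1`). -/
def fij (i j : ℕ) : Uq F N := fword F N i (j - i - 1)

/-- Product of `f_{a,b}` over successive entries of a list. -/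
def fList : List ℕ → Uq F N
  | a :: b :: rest => fij F N a b * fList (b :: rest)
  | _ => 1

/-- `f_S` for a finite set `S` of indices. -/
def fSet (S : Finset ℕ) : Uq F N := fList F N (S.sort (· ≤ ·))

/-- The index set `𝕀` of subsets of `{1,…,N+1}` containing `1` and `N+1`. -/
def II : Finset (Finset ℕ) :=
  (Finset.Icc 1 (N + 1)).powerset.filter fun I => 1 ∈ I ∧ N + 1 ∈ I

/-- `r(I) = {s - 1 : s ∈ {1,…,N+1} \ I}`. -/
def rSet (I : Finset ℕ) : Finset ℕ := (Finset.Icc 1 (N + 1) \ I).image (· - 1)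

/-- `k_{σ_i} = k_1 ⋯ k_i`. -/
def kσ (i : ℕ) : Uq F N := ((List.range i).map fun j => kgen F N (j + 1)).prod

/-- `K_{σ_i} = k_{σ_i}²`. -/
def Kσ (i : ℕ) : Uq F N := kσ F N i ^ 2

/-- `k_{σ_i}⁻¹ = k_1⁻¹ ⋯ k_i⁻¹`. -/
def kσinv (i : ℕ) : Uq F N := ((List.range i).map fun j => kinvgen F N (j + 1)).prod

/-- `K_{σ_i}⁻¹`. -/
def KσInv (i : ℕ) : Uq F N := kσinv F N i ^ 2

/-- The element `h_i = -q⁻¹ v^{-(i-1)} K_{σ_i}⁻¹ (K_{σ_i} v^i - K_{σ_i}⁻¹ v^{-i})/(v - v⁻¹) ∈ U`. -/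
def hElt (i : ℕ) : Uq F N :=
  (-(qq F)⁻¹ * vv F ^ (1 - (i : ℤ)) * (vv F - (vv F)⁻¹)⁻¹) •
    (KσInv F N i * (vv F ^ (i : ℤ) • Kσ F N i - vv F ^ (-(i : ℤ)) • KσInv F N i))

/-- `H_I = ∏_{i ∈ r(I)} h_i` (product taken in increasing order of indices). -/
def HI (I : Finset ℕ) : Uq F N := (((rSet N I).sort (· ≤ ·)).map (hElt F N)).prod

/-- A weight `λ` is recorded by its values `(λ, α_j)` for `1 ≤ j ≤ N`;
`pairσ lam i = (λ, σ_i) = (λ, α_1 + ⋯ + α_i)`. -/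
def pairσ (lam : ℕ → ℤ) (i : ℕ) : ℤ := ∑ j ∈ Finset.Icc 1 i, lam j

/-- The scalar `h_i(λ) = -q⁻¹ v^{-((λ,σ_i)+i-1)} [(λ,σ_i)+i]_v`. -/
def hval (lam : ℕ → ℤ) (i : ℕ) : kk F :=
  -(qq F)⁻¹ * vv F ^ (-(pairσ lam i + (i : ℤ) - 1)) * qint F (pairσ lam i + (i : ℤ))

/-- The scalar `H_I(λ) = ∏_{i ∈ r(I)} h_i(λ)`. -/
def HIval (lam : ℕ → ℤ) (I : Finset ℕ) : kk F := ∏ i ∈ rSet N I, hval F lam i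

/-- The left ideal `J_λ` of `U` generated by `e_1, …, e_N` and the `k_j - q^{(λ,α_j)}`. -/
def vermaIdeal (lam : ℕ → ℤ) : Submodule (Uq F N) (Uq F N) :=
  Submodule.span (Uq F N)
    ({x | ∃ j, 1 ≤ j ∧ j ≤ N ∧ x = egen F N j} ∪
      {x | ∃ j, 1 ≤ j ∧ j ≤ N ∧
        x = kgen F N j - algebraMap (kk F) (Uq F N) (qq F ^ lam j)})

/-- The Verma module `M(λ) = U/J_λ`. -/
abbrev Verma (lam : ℕ → ℤ) : Type := Uq F N ⧸ vermaIdeal F N lam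

/-- The highest weight vector `v_λ`, the image of `1` in `M(λ)`. -/
def hw (lam : ℕ → ℤ) : Verma F N lam := Submodule.Quotient.mk 1

/-- The candidate Shapovalov element `Θ_η = Σ_{I ∈ 𝕀} f_I H_I`. -/
def Theta : Uq F N := ∑ I ∈ II N, fSet F N I * HI F N I

/-- `D^n(λ)`: the `(n-1) × (n-1)` matrix over `U` with `(i,j)` entry (1-based)
`f_{i,j+1}` if `i ≤ j`, `-h_j(λ)·1` if `i = j+1`, and `0` otherwise. -/
def Dmat (lam : ℕ → ℤ) (n : ℕ) : Matrix (Fin (n - 1)) (Fin (n - 1)) (Uq F N) :=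
  Matrix.of fun i j =>
    if (i : ℕ) ≤ (j : ℕ) then fij F N ((i : ℕ) + 1) ((j : ℕ) + 2)
    else if (i : ℕ) = (j : ℕ) + 1 then
      -(algebraMap (kk F) (Uq F N) (hval F lam ((j : ℕ) + 1)))
    else 0

/-- The left-to-right determinant of a matrix with noncommutative entries. -/
def ldet {m : ℕ} (B : Matrix (Fin m) (Fin m) (Uq F N)) : Uq F N :=
  ∑ w : Equiv.Perm (Fin m),
    ((Equiv.Perm.sign w : ℤˣ) : ℤ) • ((List.finRange m).map fun j => B (w j) j).prod

end


/-! ### Abstract part -/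

/-- The relations used in the argument. -/
structure ShRels (K A : Type) [Field K] [Ring A] [Algebra K A] (q : K)
    (e f k l : ℕ → A) (fw : ℕ → ℕ → A) : Prop where
  q0 : q ≠ 0
  w0 : q ^ 4 - 1 ≠ 0
  fw0 : ∀ i, fw i 0 = f i
  fws : ∀ i d, fw i (d + 1) = q • (fw i d * f (i + 1 + d)) - q⁻¹ • (f (i + 1 + d) * fw i d)
  ff : ∀ i j, i + 1 < j → Commute (f i) (f j)
  ef : ∀ i j, i ≠ j → Commute (e i) (f j)
  ee : ∀ i, e i * f i = f i * e i + (q ^ 2 / (q ^ 4 - 1)) • (k i - l i)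
  kfar : ∀ i j, i + 1 < j ∨ j + 1 < i → Commute (k i) (f j)
  lfar : ∀ i j, i + 1 < j ∨ j + 1 < i → Commute (l i) (f j)
  knear : ∀ i j, i + 1 = j ∨ j + 1 = i → k i * f j = q ^ 2 • (f j * k i)
  lnear : ∀ i j, i + 1 = j ∨ j + 1 = i → l i * f j = (q ^ 2)⁻¹ • (f j * l i)

namespace ShRels

section alg
variable {K A : Type} [Field K] [Ring A] [Algebra K A] {q : K}
    {e f k l : ℕ → A} {fw : ℕ → ℕ → A}

theorem comm_fw (R : ShRels K A q e f k l fw) (x : A) (i d : ℕ)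
    (h : ∀ j, i ≤ j → j ≤ i + d → Commute x (f j)) : Commute x (fw i d) := by
  induction d with
  | zero => rw [R.fw0]; exact h i le_rfl le_rfl
  | succ d ih =>
    have h1 := ih (fun j h1 h2 => h j h1 (by omega))
    have h2 := h (i + 1 + d) (by omega) (by omega)
    rw [R.fws]
    exact ((h1.mul_right h2).smul_right q).sub_right ((h2.mul_right h1).smul_right q⁻¹)

theorem tw_left (R : ShRels K A q e f k l fw) (x : A) (c : K) (i d : ℕ)
    (h0 : x * f i = c • (f i * x))
    (h : ∀ j, i + 1 ≤ j → j ≤ i + d → Commute x (f j)) :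
    x * fw i d = c • (fw i d * x) := by
  induction d with
  | zero => rw [R.fw0]; exact h0
  | succ d ih =>
    have h1 := ih (fun j h1 h2 => h j h1 (by omega))
    have h2 : x * f (i + 1 + d) = f (i + 1 + d) * x := h (i + 1 + d) (by omega) (by omega)
    rw [R.fws]
    simp only [mul_sub, sub_mul, mul_smul_comm, smul_mul_assoc]
    rw [← mul_assoc, h1, smul_mul_assoc, mul_assoc, h2, ← mul_assoc x, h2, mul_assoc _ x, h1]
    simp only [mul_smul_comm, mul_assoc]
    module

theorem tw_right (R : ShRels K A q e f k l fw) (x : A) (c : K) (i d : ℕ)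
    (h0 : x * f (i + d) = c • (f (i + d) * x))
    (h : ∀ j, i ≤ j → j < i + d → Commute x (f j)) :
    x * fw i d = c • (fw i d * x) := by
  cases d with
  | zero => rw [R.fw0]; exact h0
  | succ d =>
    have h1 : x * fw i d = fw i d * x := R.comm_fw x i d (fun j h1 h2 => h j h1 (by omega))
    have h2 : x * f (i + 1 + d) = c • (f (i + 1 + d) * x) := by
      rw [show i + 1 + d = i + (d + 1) by omega]; exact h0
    rw [R.fws]
    simp only [mul_sub, sub_mul, mul_smul_comm, smul_mul_assoc]
    rw [← mul_assoc, h1, mul_assoc, h2, ← mul_assoc x, h2, smul_mul_assoc, mul_assoc _ x, h1]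
    simp only [mul_smul_comm, mul_assoc]
    module

theorem e_comm (R : ShRels K A q e f k l fw) (m i d : ℕ) (h : m < i ∨ i + d < m) :
    Commute (e m) (fw i d) :=
  R.comm_fw _ _ _ (fun j h1 h2 => R.ef _ _ (by omega))

theorem E1 (R : ShRels K A q e f k l fw) (i d : ℕ) :
    e (i + 1 + d) * fw i (d + 1)
      = fw i (d + 1) * e (i + 1 + d) - q⁻¹ • (fw i d * l (i + 1 + d)) := by
  have q0 := R.q0
  have w0 := R.w0
  have h1 : e (i + 1 + d) * fw i d = fw i d * e (i + 1 + d) := R.e_comm _ _ _ (by omega)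
  have h2 := R.ee (i + 1 + d)
  have h3 : k (i + 1 + d) * fw i d = q ^ 2 • (fw i d * k (i + 1 + d)) :=
    R.tw_right _ _ _ _ (R.knear _ _ (by omega)) (fun j h1 h2 => R.kfar _ _ (by omega))
  have h4 : l (i + 1 + d) * fw i d = (q ^ 2)⁻¹ • (fw i d * l (i + 1 + d)) :=
    R.tw_right _ _ _ _ (R.lnear _ _ (by omega)) (fun j h1 h2 => R.lfar _ _ (by omega))
  rw [R.fws]
  generalize i + 1 + d = n at *
  simp only [mul_sub, sub_mul, mul_smul_comm, smul_mul_assoc]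
  rw [← mul_assoc, h1, mul_assoc, h2, ← mul_assoc (e n), h2, add_mul, mul_assoc _ (e n), h1,
    smul_mul_assoc, sub_mul, h3, h4]
  simp only [mul_smul_comm, mul_assoc, mul_add, mul_sub]
  match_scalars <;> field_simp <;> ring

theorem E2 (R : ShRels K A q e f k l fw) (i d : ℕ) :
    e i * fw i (d + 1) = fw i (d + 1) * e i + q • (fw (i + 1) d * k i) := by
  have q0 := R.q0
  have w0 := R.w0
  induction d with
  | zero =>
    have h1 : e i * f (i + 1) = f (i + 1) * e i := R.ef _ _ (by omega)
    have h2 := R.ee i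
    have h3 := R.knear i (i + 1) (by omega)
    have h4 := R.lnear i (i + 1) (by omega)
    simp only [R.fws, R.fw0, Nat.add_zero]
    simp only [mul_sub, sub_mul, mul_smul_comm, smul_mul_assoc]
    rw [← mul_assoc, h2, ← mul_assoc (e i), h1, mul_assoc _ (e i), h2,
      add_mul, mul_assoc _ (e i), h1, smul_mul_assoc, sub_mul, h3, h4]
    simp only [mul_smul_comm, mul_assoc, mul_add, mul_sub]
    match_scalars <;> field_simp <;> ring
  | succ d ih =>
    have h1 : e i * f (i + 1 + (d + 1)) = f (i + 1 + (d + 1)) * e i := R.ef _ _ (by omega)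
    have h3 : k i * f (i + 1 + (d + 1)) = f (i + 1 + (d + 1)) * k i := R.kfar _ _ (by omega)
    rw [R.fws i (d + 1), R.fws (i + 1) d]
    rw [show i + 1 + 1 + d = i + 1 + (d + 1) by omega]
    generalize i + 1 + (d + 1) = n at *
    simp only [mul_sub, sub_mul, mul_smul_comm, smul_mul_assoc]
    rw [← mul_assoc, ih, ← mul_assoc (e i), h1, mul_assoc _ (e i), ih, add_mul, mul_assoc _ (e i),
      h1, smul_mul_assoc, mul_assoc _ (k i), h3]
    simp only [mul_smul_comm, mul_assoc, mul_add]
    module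

theorem E3 (R : ShRels K A q e f k l fw) (i c m : ℕ) :
    Commute (e (i + 1 + c)) (fw i (c + 2 + m)) := by
  have q0 := R.q0
  induction m with
  | zero =>
    have h0 := R.E1 i c
    have h1 : e (i + 1 + c) * f (i + 1 + (c + 1)) = f (i + 1 + (c + 1)) * e (i + 1 + c) :=
      R.ef _ _ (by omega)
    have h3 := R.lnear (i + 1 + c) (i + 1 + (c + 1)) (by omega)
    have h4 : f (i + 1 + (c + 1)) * fw i c = fw i c * f (i + 1 + (c + 1)) :=
      R.comm_fw _ _ _ (fun j h1 h2 => (R.ff _ _ (by omega)).symm)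
    show _ * _ = _ * _
    rw [Nat.add_zero, R.fws i (c + 1)]
    generalize i + 1 + c = a at *
    generalize i + 1 + (c + 1) = b at *
    simp only [mul_sub, sub_mul, mul_smul_comm, smul_mul_assoc]
    rw [← mul_assoc, h0, ← mul_assoc (e a), h1, mul_assoc _ (e a), h0, sub_mul, mul_assoc _ (e a),
      h1, smul_mul_assoc, mul_assoc _ (l a), h3]
    simp only [mul_smul_comm, mul_assoc, mul_sub]
    rw [← mul_assoc (f b) (fw i c), h4, mul_assoc (fw i c)]
    match_scalars <;> field_simp <;> ring
  | succ m ih =>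
    have h2 := R.ef (i + 1 + c) (i + 1 + (c + 2 + m)) (by omega)
    rw [← add_assoc, R.fws]
    exact ((ih.mul_right h2).smul_right q).sub_right ((h2.mul_right ih).smul_right q⁻¹)

end alg

section mod
variable {K A M : Type} [Field K] [Ring A] [Algebra K A] [AddCommGroup M] [Module K M]
  [Module A M] [IsScalarTower K A M] {q : K}
    {e f k l : ℕ → A} {fw : ℕ → ℕ → A}

/-- Data for the module side: `T a c` is the partial sum with last index `a` and scanning
position `c`. -/
structure Tdat (q : K) (e k l : ℕ → A) (fw : ℕ → ℕ → A) (N : ℕ) (lam : ℕ → ℤ) (h : ℕ → K)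
    (v : M) (T : ℕ → ℕ → M) : Prop where
  ev : ∀ i, e i • v = 0
  kv : ∀ i, 1 ≤ i → i ≤ N → k i • v = (q ^ 2) ^ (lam i) • v
  lv : ∀ i, 1 ≤ i → i ≤ N → l i • v = (q ^ 2) ^ (- lam i) • v
  base : ∀ a, a ≤ N → T a (N + 1) = fw a (N - a) • v
  step : ∀ a c, a < c → c ≤ N → T a c = h (c - 1) • T a (c + 1) + fw a (c - a - 1) • T c (c + 1)

variable {N : ℕ} {lam : ℕ → ℤ} {h : ℕ → K} {v : M} {T : ℕ → ℕ → M}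

/-- Downward induction in the second index. -/
theorem T_ind (D : Tdat q e k l fw N lam h v T) (P : ℕ → ℕ → M → Prop)
    (hb : ∀ a, a ≤ N → P a (N + 1) (fw a (N - a) • v))
    (hs : ∀ a c, a < c → c ≤ N → P a (c + 1) (T a (c + 1)) → P c (c + 1) (T c (c + 1)) →
      P a c (h (c - 1) • T a (c + 1) + fw a (c - a - 1) • T c (c + 1))) :
    ∀ a c, a < c → c ≤ N + 1 → P a c (T a c) := by
  have key : ∀ d a c, c + d = N + 1 → a < c → P a c (T a c) := by
    intro d
    induction d with
    | zero =>
      intro a c h1 h2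
      obtain rfl : c = N + 1 := by omega
      rw [D.base a (by omega)]; exact hb a (by omega)
    | succ d ih =>
      intro a c h1 h2
      rw [D.step a c h2 (by omega)]
      exact hs a c h2 (by omega) (ih _ _ (by omega) (by omega)) (ih _ _ (by omega) (by omega))
  intro a c h1 h2
  exact key (N + 1 - c) a c (by omega) h1

theorem csmul {x y : A} (hc : Commute x y) (m : M) : x • y • m = y • x • m := by
  rw [smul_smul, hc.eq, mul_smul]

/-- An element commuting with everything from `b` on acts by its scalar on `v`. -/
theorem T_scal (R : ShRels K A q e f k l fw) (D : Tdat q e k l fw N lam h v T) (x : A) (s : K)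
    (hx : x • v = s • v) (b : ℕ) (hc : ∀ j, b ≤ j → Commute x (f j)) :
    ∀ a c, a < c → c ≤ N + 1 → b ≤ a → x • T a c = s • T a c := by
  refine T_ind D (fun a c t => b ≤ a → x • t = s • t) ?_ ?_
  · intro a ha hb
    rw [csmul (R.comm_fw x _ _ (fun j h1 _ => hc j (by omega))), hx,
      smul_algebra_smul_comm]
  · intro a c h1 h2 i1 i2 hb
    rw [smul_add, smul_algebra_smul_comm, i1 hb,
      csmul (R.comm_fw x _ _ (fun j h1 _ => hc j (by omega))), i2 (by omega), smul_add,
      smul_comm s (h (c - 1)), smul_algebra_smul_comm s (fw a (c - a - 1))]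

/-- Twisted version. -/
theorem T_tw (R : ShRels K A q e f k l fw) (D : Tdat q e k l fw N lam h v T) (x : A) (s r : K)
    (hx : x • v = s • v) (b : ℕ) (h0 : x * f b = r • (f b * x))
    (hc : ∀ j, b + 1 ≤ j → Commute x (f j)) :
    ∀ a c, a < c → c ≤ N + 1 → b = a → x • T a c = (r * s) • T a c := by
  have hS := T_scal R D x s hx (b + 1) hc
  refine T_ind D (fun a c t => b = a → x • t = (r * s) • t) ?_ ?_
  · rintro a ha rfl
    rw [smul_smul, R.tw_left x r _ _ h0 (fun j h1 _ => hc j (by omega)), smul_assoc, mul_smul, hx,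
      smul_algebra_smul_comm, mul_smul]
  · rintro a c h1 h2 i1 i2 rfl
    rw [smul_add, smul_algebra_smul_comm, i1 rfl, smul_smul x,
      R.tw_left x r _ _ h0 (fun j h1 _ => hc j (by omega)), smul_assoc, mul_smul _ x,
      hS _ _ (by omega) (by omega) (by omega), smul_algebra_smul_comm _ (fw b _)]
    generalize fw b (c - b - 1) • T c (c + 1) = z
    module

theorem e_lt (R : ShRels K A q e f k l fw) (D : Tdat q e k l fw N lam h v T) (m : ℕ) :
    ∀ a c, a < c → c ≤ N + 1 → m < a → e m • T a c = 0 := by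
  intro a c h1 h2 h3
  have := T_scal R D (e m) 0 (by rw [D.ev, zero_smul]) (m + 1)
    (fun j hj => R.ef _ _ (by omega)) a c h1 h2 (by omega)
  rw [this, zero_smul]

/-- `e_m T(a,c) = 0` for `a < m`, `m + 2 ≤ c`. -/
theorem e_skip (R : ShRels K A q e f k l fw) (D : Tdat q e k l fw N lam h v T) (m : ℕ) :
    ∀ a c, a < c → c ≤ N + 1 → a < m → m + 2 ≤ c → e m • T a c = 0 := by
  have hE : ∀ a d, a < m → m ≤ a + d → m + 1 ≤ a + d → Commute (e m) (fw a d) := by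
    intro a d h1 h2 h3
    have := R.E3 a (m - a - 1) (d - (m - a - 1) - 2)
    rwa [show a + 1 + (m - a - 1) = m by omega,
      show m - a - 1 + 2 + (d - (m - a - 1) - 2) = d by omega] at this
  refine T_ind D (fun a c t => a < m → m + 2 ≤ c → e m • t = 0) ?_ ?_
  · intro a h1 h2 h3
    rw [csmul (hE a _ h2 (by omega) (by omega)), D.ev, smul_zero]
  · intro a c h1 h2 i1 _ h3 h4
    rw [smul_add, smul_algebra_smul_comm, i1 h3 (by omega),
      csmul (hE a _ h3 (by omega) (by omega)), e_lt R D m c _ (by omega) (by omega) (by omega)]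
    simp

/-- `e_m T(m,c) = q v^{λ_m} T(m+1,c)` for `m + 2 ≤ c`. -/
theorem e_first (R : ShRels K A q e f k l fw) (D : Tdat q e k l fw N lam h v T) (m : ℕ)
    (hm : 1 ≤ m) (hmN : m ≤ N) :
    ∀ a c, a < c → c ≤ N + 1 → a = m → m + 2 ≤ c →
      e m • T a c = (q * (q ^ 2) ^ (lam m)) • T (m + 1) c := by
  refine T_ind D (fun a c t => a = m → m + 2 ≤ c →
      e m • t = (q * (q ^ 2) ^ (lam m)) • T (m + 1) c) ?_ ?_
  · rintro a h1 rfl h3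
    rw [D.base _ (by omega), show N - a = (N - (a + 1)) + 1 by omega, smul_smul, R.E2, add_smul,
      mul_smul, D.ev, smul_zero, zero_add, smul_assoc, mul_smul, D.kv a hm hmN,
      smul_algebra_smul_comm, smul_smul]
  · rintro a c h1 h2 i1 _ rfl h4
    rw [smul_add, smul_algebra_smul_comm, i1 rfl (by omega), D.step (a + 1) c (by omega) h2,
      show c - a - 1 = (c - (a + 1) - 1) + 1 by omega, smul_smul (e a), R.E2, add_smul,
      mul_smul _ (e a), e_lt R D a c _ (by omega) (by omega) (by omega), smul_zero, zero_add,
      smul_assoc, mul_smul _ (k a), T_scal R D (k a) _ (D.kv a hm hmN) (a + 2)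
        (fun j hj => R.kfar _ _ (by omega)) c (c + 1) (by omega) (by omega) (by omega),
      smul_algebra_smul_comm _ (fw (a + 1) _)]
    generalize fw (a + 1) (c - (a + 1) - 1) • T c (c + 1) = z
    module

/-- `e_m` kills everything once it kills the first relevant term. -/
theorem e_scan (R : ShRels K A q e f k l fw) (D : Tdat q e k l fw N lam h v T) (m : ℕ)
    (hmN : m ≤ N) (hk : ∀ a, a < m → 1 ≤ a → e m • T a m = 0) :
    ∀ a c, a < c → c ≤ N + 1 → 1 ≤ a → c ≤ m → e m • T a c = 0 := by
  refine fun a c h1 h2 => T_ind D (fun a c t => T a c = t → 1 ≤ a → c ≤ m → e m • t = 0) ?_ ?_ a c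
    h1 h2 rfl
  · intro a _ _ _ h; omega
  · intro a c h1 h2 i1 i2 ht ha hc
    rcases Nat.lt_or_ge c m with h3 | h3
    · rw [smul_add, smul_algebra_smul_comm, i1 rfl ha h3, csmul (R.e_comm _ _ _ (by omega)),
        i2 rfl (by omega) h3]
      simp
    · obtain rfl : c = m := by omega
      rw [← ht]; exact hk a h1 ha

theorem e_mid (R : ShRels K A q e f k l fw) (D : Tdat q e k l fw N lam h v T) (m : ℕ)
    (hm : 1 ≤ m) (hmN : m < N) :
    e m • T m (m + 1) = (h m * (q * (q ^ 2) ^ (lam m)) + (q ^ 2 / (q ^ 4 - 1)) *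
      (q ^ 2 * (q ^ 2) ^ (lam m) - (q ^ 2)⁻¹ * (q ^ 2) ^ (- lam m))) • T (m + 1) (m + 2) := by
  have hK := T_tw R D (k m) _ _ (D.kv m hm hmN.le) (m + 1) (R.knear _ _ (by omega))
    (fun j hj => R.kfar _ _ (by omega)) (m + 1) (m + 2) (by omega) (by omega) rfl
  have hL := T_tw R D (l m) _ _ (D.lv m hm hmN.le) (m + 1) (R.lnear _ _ (by omega))
    (fun j hj => R.lfar _ _ (by omega)) (m + 1) (m + 2) (by omega) (by omega) rfl
  rw [D.step m (m + 1) (by omega) (by omega), smul_add, smul_algebra_smul_comm,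
    e_first R D m hm hmN.le m _ (by omega) (by omega) rfl (by omega),
    show m + 1 - m - 1 = 0 by omega, R.fw0, smul_smul (e m), R.ee, add_smul, mul_smul (f m),
    e_lt R D m (m + 1) _ (by omega) (by omega) (by omega), smul_zero, zero_add, smul_assoc,
    sub_smul, hK, hL, Nat.add_sub_cancel]
  module

theorem e_mid' (R : ShRels K A q e f k l fw) (D : Tdat q e k l fw N lam h v T) (m : ℕ)
    (hm : 1 ≤ m) (hmN : m < N) (a : ℕ) (ha : a < m) :
    e m • T a (m + 1) = (-(q⁻¹ * ((q ^ 2)⁻¹ * (q ^ 2) ^ (- lam m)))) •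
      fw a (m - a - 1) • T (m + 1) (m + 2) := by
  have hL := T_tw R D (l m) _ _ (D.lv m hm hmN.le) (m + 1) (R.lnear _ _ (by omega))
    (fun j hj => R.lfar _ _ (by omega)) (m + 1) (m + 2) (by omega) (by omega) rfl
  have hE := R.E1 a (m - a - 1)
  rw [show a + 1 + (m - a - 1) = m by omega] at hE
  rw [D.step a (m + 1) (by omega) (by omega), smul_add, smul_algebra_smul_comm,
    e_skip R D m a _ (by omega) (by omega) ha (by omega), smul_zero, zero_add,
    show m + 1 - a - 1 = m - a - 1 + 1 by omega, smul_smul, hE, sub_smul, mul_smul _ (e m),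
    e_lt R D m (m + 1) _ (by omega) (by omega) (by omega), smul_zero, zero_sub, smul_assoc,
    mul_smul, hL, smul_algebra_smul_comm]
  generalize fw a (m - a - 1) • T (m + 1) (m + 2) = z
  module

theorem main_a (R : ShRels K A q e f k l fw) (D : Tdat q e k l fw N lam h v T) (m : ℕ)
    (hm : 1 ≤ m) (hmN : m < N)
    (hh : h m * (q * (q ^ 2) ^ (lam m)) + (q ^ 2 / (q ^ 4 - 1)) *
      (q ^ 2 * (q ^ 2) ^ (lam m) - (q ^ 2)⁻¹ * (q ^ 2) ^ (- lam m)) =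
      h (m - 1) * (q⁻¹ * ((q ^ 2)⁻¹ * (q ^ 2) ^ (- lam m)))) (h0 : h 0 = 0) :
    e m • T 1 2 = 0 := by
  have h1 := e_mid R D m hm hmN
  rw [hh] at h1
  rcases Nat.lt_or_ge 1 m with h3 | h3
  · refine e_scan R D m hmN.le ?_ 1 2 (by omega) (by omega) le_rfl h3
    intro a ha _
    rw [D.step a m ha hmN.le, smul_add, smul_algebra_smul_comm, e_mid' R D m hm hmN a ha,
      csmul (R.e_comm _ _ _ (by omega)), h1, smul_algebra_smul_comm _ (fw a _)]
    generalize fw a (m - a - 1) • T (m + 1) (m + 2) = z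
    module
  · obtain rfl : m = 1 := by omega
    rw [h1, Nat.sub_self, h0]
    simp

theorem main_b (R : ShRels K A q e f k l fw) (D : Tdat q e k l fw N lam h v T)
    (hN : 1 ≤ N)
    (hh : (q ^ 2 / (q ^ 4 - 1)) * ((q ^ 2) ^ (lam N) - (q ^ 2) ^ (- lam N)) =
      h (N - 1) * (q⁻¹ * (q ^ 2) ^ (- lam N))) (h0 : h 0 = 0) :
    e N • T 1 2 = 0 := by
  have h1 : e N • T N (N + 1) = (h (N - 1) * (q⁻¹ * (q ^ 2) ^ (- lam N))) • v := by
    rw [← hh, D.base N le_rfl, Nat.sub_self, R.fw0, smul_smul, R.ee, add_smul, mul_smul, D.ev,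
      smul_zero, zero_add, smul_assoc, sub_smul, D.kv N hN le_rfl, D.lv N hN le_rfl]
    module
  rcases Nat.lt_or_ge 1 N with h3 | h3
  · refine e_scan R D N le_rfl ?_ 1 2 (by omega) (by omega) le_rfl h3
    intro a ha _
    have hE := R.E1 a (N - a - 1)
    rw [show a + 1 + (N - a - 1) = N by omega] at hE
    rw [D.step a N ha le_rfl, smul_add, smul_algebra_smul_comm, csmul (R.e_comm _ _ _ (by omega)),
      h1, D.base a (by omega), show N - a = N - a - 1 + 1 by omega, smul_smul (e N), hE, sub_smul,
      mul_smul, D.ev, smul_zero, zero_sub, smul_assoc, mul_smul, D.lv N hN le_rfl,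
      smul_algebra_smul_comm _ (fw a _), smul_algebra_smul_comm _ (fw a _), Nat.add_sub_cancel]
    generalize fw a (N - a - 1) • v = z
    module
  · obtain rfl : N = 1 := by omega
    rw [h1, Nat.sub_self, h0]
    simp

end mod
end ShRels

/-! ### Concrete part -/

section conc
variable (F : Type) [Field F] (N : ℕ)

theorem qq_ne : qq F ≠ 0 := RatFunc.X_ne_zero

theorem qq_w : qq F ^ 4 - 1 ≠ 0 := by
  intro h
  have h1 : (Polynomial.X ^ 4 - Polynomial.C 1 : Polynomial F) = 0 := by
    apply RatFunc.algebraMap_injective F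
    simpa [qq] using h
  exact Polynomial.X_pow_sub_C_ne_zero (by norm_num) 1 h1

theorem relU {x y : FreeAlgebra (kk F) (Gen N)} (h : UqRel F N x y) :
    RingQuot.mkAlgHom (kk F) (UqRel F N) x = RingQuot.mkAlgHom (kk F) (UqRel F N) y :=
  RingQuot.mkAlgHom_rel _ h

theorem kkinv_gen (i : ℕ) (h : 1 ≤ i ∧ i ≤ N) : kgen F N i * kinvgen F N i = 1 := by
  simpa [kgen, kinvgen, h, gen] using relU F N (UqRel.kkinv ⟨i - 1, by omega⟩)

theorem kinvk_gen (i : ℕ) (h : 1 ≤ i ∧ i ≤ N) : kinvgen F N i * kgen F N i = 1 := by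
  simpa [kgen, kinvgen, h, gen] using relU F N (UqRel.kinvk ⟨i - 1, by omega⟩)

theorem kf_gen (i j : ℕ) :
    kgen F N i * fgen F N j = (qq F ^ (-cartan i j)) • (fgen F N j * kgen F N i) := by
  by_cases hi : 1 ≤ i ∧ i ≤ N
  swap
  · simp [kgen, hi]
  by_cases hj : 1 ≤ j ∧ j ≤ N
  swap
  · simp [fgen, hj]
  have h := relU F N (UqRel.kf ⟨i - 1, by omega⟩ ⟨j - 1, by omega⟩)
  have h1 : kgen F N i * fgen F N j * kinvgen F N i = (qq F ^ (-cartan i j)) • fgen F N j := by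
    have e1 : i - 1 + 1 = i := by omega
    have e2 : j - 1 + 1 = j := by omega
    simp only [map_mul, map_smul, e1, e2] at h
    simpa only [kgen, kinvgen, fgen, dif_pos hi, dif_pos hj, gen] using h
  rw [← smul_mul_assoc, ← h1, mul_assoc, kinvk_gen F N i hi, mul_one]

theorem kinvf_gen (i j : ℕ) :
    kinvgen F N i * fgen F N j = (qq F ^ (cartan i j)) • (fgen F N j * kinvgen F N i) := by
  by_cases hi : 1 ≤ i ∧ i ≤ N
  swap
  · simp [kinvgen, hi]
  have h := kf_gen F N i j
  have h1 : kinvgen F N i * (kgen F N i * fgen F N j) * kinvgen F N i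
      = qq F ^ (-cartan i j) • (kinvgen F N i * fgen F N j) := by
    rw [h, mul_smul_comm, smul_mul_assoc, mul_assoc, mul_assoc, kkinv_gen F N i hi, mul_one]
  rw [← mul_assoc, kinvk_gen F N i hi, one_mul] at h1
  rw [h1, smul_smul, ← zpow_add₀ (qq_ne F)]
  simp

theorem ef_gen (i j : ℕ) (hij : i ≠ j) : Commute (egen F N i) (fgen F N j) := by
  by_cases hi : 1 ≤ i ∧ i ≤ N
  swap
  · simp [egen, hi]
  by_cases hj : 1 ≤ j ∧ j ≤ N
  swap
  · simp [fgen, hj]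
  have h := relU F N (UqRel.ef ⟨i - 1, by omega⟩ ⟨j - 1, by omega⟩)
  rw [if_neg (by rw [Fin.mk.injEq]; omega)] at h
  simp only [map_mul, map_sub, map_zero] at h
  rw [sub_eq_zero] at h
  simp only [egen, fgen, dif_pos hi, dif_pos hj, gen]
  exact h

theorem ee_gen (i : ℕ) : egen F N i * fgen F N i = fgen F N i * egen F N i +
    (qq F ^ 2 / (qq F ^ 4 - 1)) • (kgen F N i ^ 2 - kinvgen F N i ^ 2) := by
  by_cases hi : 1 ≤ i ∧ i ≤ N
  swap
  · simp [egen, kgen, kinvgen, hi]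
  have h := relU F N (UqRel.ef ⟨i - 1, by omega⟩ ⟨i - 1, by omega⟩)
  rw [if_pos rfl] at h
  simp only [map_mul, map_sub, map_smul, map_pow] at h
  have hc : (qq F ^ 2 - qq F ^ (-2 : ℤ))⁻¹ = qq F ^ 2 / (qq F ^ 4 - 1) := by
    have h0 := qq_ne F
    have h1 := qq_w F
    rw [show qq F ^ 2 - qq F ^ (-2 : ℤ) = (qq F ^ 4 - 1) / qq F ^ 2 by
      rw [zpow_neg]; norm_cast; field_simp, inv_div]
  rw [hc, sub_eq_iff_eq_add'] at h
  simpa only [egen, fgen, kgen, kinvgen, dif_pos hi, gen] using h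

theorem ff_gen (i j : ℕ) (hij : i + 1 < j) : Commute (fgen F N i) (fgen F N j) := by
  by_cases hi : 1 ≤ i ∧ i ≤ N
  swap
  · simp [fgen, hi]
  by_cases hj : 1 ≤ j ∧ j ≤ N
  swap
  · simp [fgen, hj]
  have h := relU F N (UqRel.serre_f_far ⟨i - 1, by omega⟩ ⟨j - 1, by omega⟩
    (by left; show i - 1 + 1 < j - 1; omega))
  simp only [map_mul] at h
  simp only [fgen, dif_pos hi, dif_pos hj, gen]
  exact h

theorem tw_sq {K A : Type} [Field K] [Ring A] [Algebra K A] {x y : A} {c : K}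
    (h : x * y = c • (y * x)) : x ^ 2 * y = c ^ 2 • (y * x ^ 2) := by
  rw [pow_two, mul_assoc, h, mul_smul_comm, ← mul_assoc, h, smul_mul_assoc, smul_smul, mul_assoc,
    pow_two]

theorem shRels : ShRels (kk F) (Uq F N) (qq F) (egen F N) (fgen F N)
    (fun i => kgen F N i ^ 2) (fun i => kinvgen F N i ^ 2) (fword F N) where
  q0 := qq_ne F
  w0 := qq_w F
  fw0 i := rfl
  fws i d := rfl
  ff := ff_gen F N
  ef := ef_gen F N
  ee := ee_gen F N
  kfar i j h := by
    have := tw_sq (kf_gen F N i j)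
    rw [show cartan i j = 0 by unfold cartan; rw [if_neg (by omega), if_neg (by omega)]] at this
    simp only [neg_zero, zpow_zero, one_pow, one_smul] at this
    exact this
  lfar i j h := by
    have := tw_sq (kinvf_gen F N i j)
    rw [show cartan i j = 0 by unfold cartan; rw [if_neg (by omega), if_neg (by omega)]] at this
    simp only [neg_zero, zpow_zero, one_pow, one_smul] at this
    exact this
  knear i j h := by
    have := tw_sq (kf_gen F N i j)
    rw [show cartan i j = -1 by unfold cartan; rw [if_neg (by omega), if_pos (by omega)]] at this
    simpa using this
  lnear i j h := by
    have := tw_sq (kinvf_gen F N i j)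
    rw [show cartan i j = -1 by unfold cartan; rw [if_neg (by omega), if_pos (by omega)]] at this
    simpa using this

/-- A highest weight vector. -/
structure HWv {M : Type} [AddCommGroup M] [Module (kk F) M] [Module (Uq F N) M]
    (lam : ℕ → ℤ) (v : M) : Prop where
  ev : ∀ i, egen F N i • v = 0
  kv : ∀ i, 1 ≤ i → i ≤ N → kgen F N i • v = qq F ^ lam i • v

theorem e_hw (lam : ℕ → ℤ) (i : ℕ) : egen F N i • hw F N lam = 0 := by
  by_cases hi : 1 ≤ i ∧ i ≤ N
  swap
  · simp [egen, hi]
  rw [hw, ← Submodule.Quotient.mk_smul, Submodule.Quotient.mk_eq_zero, smul_eq_mul, mul_one]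
  exact Submodule.subset_span (Or.inl ⟨i, hi.1, hi.2, rfl⟩)

theorem k_hw (lam : ℕ → ℤ) (i : ℕ) (h1 : 1 ≤ i) (h2 : i ≤ N) :
    kgen F N i • hw F N lam = algebraMap (kk F) (Uq F N) (qq F ^ lam i) • hw F N lam := by
  have : (kgen F N i - algebraMap (kk F) (Uq F N) (qq F ^ lam i)) • hw F N lam = 0 := by
    rw [hw, ← Submodule.Quotient.mk_smul, Submodule.Quotient.mk_eq_zero, smul_eq_mul, mul_one]
    exact Submodule.subset_span (Or.inr ⟨i, h1, h2, rfl⟩)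
  rwa [sub_smul, sub_eq_zero] at this

variable (lam : ℕ → ℤ) {M : Type} [AddCommGroup M] [Module (kk F) M] [Module (Uq F N) M]
  [IsScalarTower (kk F) (Uq F N) M] {v : M}

theorem kinv_hw (V : HWv F N lam v) (i : ℕ) (h1 : 1 ≤ i) (h2 : i ≤ N) :
    kinvgen F N i • v = qq F ^ (-lam i) • v := by
  have h := congrArg (fun z => kinvgen F N i • z) (V.kv i h1 h2)
  rw [smul_smul, kinvk_gen F N i ⟨h1, h2⟩, one_smul, smul_algebra_smul_comm] at h
  conv_rhs => rw [h, smul_smul, ← zpow_add₀ (qq_ne F)]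
  simp

theorem list_hw {K A M ι : Type} [Field K] [Ring A] [Algebra K A] [AddCommGroup M] [Module K M]
    [Module A M] [IsScalarTower K A M] (v : M) (x : ι → A) (c : ι → K) (L : List ι)
    (h : ∀ i ∈ L, x i • v = c i • v) : (L.map x).prod • v = (L.map c).prod • v := by
  induction L with
  | nil => simp
  | cons a L ih =>
    simp only [List.map_cons, List.prod_cons]
    rw [mul_smul, ih (fun i hi => h i (List.mem_cons_of_mem _ hi)), smul_algebra_smul_comm,
      h a List.mem_cons_self, smul_smul, mul_comm]

theorem kσ_prod (s : ℤ) (i : ℕ) :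
    ((List.range i).map fun j => qq F ^ (s * lam (j + 1))).prod = qq F ^ (s * pairσ lam i) := by
  induction i with
  | zero => simp [pairσ]
  | succ i ih =>
    rw [List.range_succ, List.map_append, List.prod_append, ih, pairσ, pairσ,
      Finset.sum_Icc_succ_top (by omega)]
    simp [mul_add, zpow_add₀ (qq_ne F)]

theorem sq_hw {K A M : Type} [Field K] [Ring A] [Algebra K A] [AddCommGroup M] [Module K M]
    [Module A M] [IsScalarTower K A M] {v : M} {x : A} {c : K}
    (h : x • v = c • v) : x ^ 2 • v = c ^ 2 • v := by
  rw [pow_two, mul_smul, h, smul_algebra_smul_comm, h, smul_smul, pow_two]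

theorem Kσ_hw (V : HWv F N lam v) (i : ℕ) (h : i ≤ N) :
    Kσ F N i • v = vv F ^ pairσ lam i • v := by
  have h1 : kσ F N i • v = qq F ^ (1 * pairσ lam i) • v := by
    rw [← kσ_prod, kσ]
    refine list_hw _ _ _ _ (fun j hj => ?_)
    rw [List.mem_range] at hj
    rw [one_mul]
    exact V.kv (j + 1) (by omega) (by omega)
  rw [Kσ, sq_hw h1, one_mul, vv, ← zpow_natCast, ← zpow_mul, ← zpow_natCast, ← zpow_mul,
    mul_comm]

theorem KσInv_hw (V : HWv F N lam v) (i : ℕ) (h : i ≤ N) :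
    KσInv F N i • v = vv F ^ (-pairσ lam i) • v := by
  have h1 : kσinv F N i • v = qq F ^ ((-1) * pairσ lam i) • v := by
    rw [← kσ_prod, kσinv]
    refine list_hw _ _ _ _ (fun j hj => ?_)
    rw [List.mem_range] at hj
    rw [neg_one_mul]
    exact kinv_hw F N lam V (j + 1) (by omega) (by omega)
  rw [KσInv, sq_hw h1, neg_one_mul, vv, ← zpow_natCast, ← zpow_mul, ← zpow_natCast, ← zpow_mul,
    mul_comm]

theorem vv_ne : vv F ≠ 0 := pow_ne_zero _ (qq_ne F)

theorem h_hw (V : HWv F N lam v) (i : ℕ) (h : i ≤ N) : hElt F N i • v = hval F lam i • v := by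
  have v0 := vv_ne F
  have hx : (KσInv F N i * (vv F ^ (i : ℤ) • Kσ F N i - vv F ^ (-(i : ℤ)) • KσInv F N i)) • v =
      ((vv F ^ (i : ℤ) * vv F ^ (pairσ lam i) - vv F ^ (-(i : ℤ)) * vv F ^ (-pairσ lam i)) *
        vv F ^ (-pairσ lam i)) • v := by
    rw [mul_smul, sub_smul, smul_assoc, smul_assoc, Kσ_hw F N lam V i h,
      KσInv_hw F N lam V i h, smul_smul, smul_smul, ← sub_smul,
      smul_algebra_smul_comm _ (KσInv F N i), KσInv_hw F N lam V i h, smul_smul]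
  have hy : hElt F N i • v = (-(qq F)⁻¹ * vv F ^ (1 - (i : ℤ)) * (vv F - (vv F)⁻¹)⁻¹) •
      (KσInv F N i * (vv F ^ (i : ℤ) • Kσ F N i - vv F ^ (-(i : ℤ)) • KσInv F N i)) • v :=
    smul_assoc _ _ v
  rw [hy, hx, smul_smul]
  congr 1
  rw [hval, qint,
    show -(pairσ lam i + (i : ℤ) - 1) = (1 - (i : ℤ)) + (-pairσ lam i) by ring,
    neg_add, zpow_add₀ v0 (1 - (i : ℤ)), zpow_add₀ v0 (pairσ lam i), zpow_add₀ v0 (-pairσ lam i)]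
  ring

theorem HI_hw (V : HWv F N lam v) (I : Finset ℕ) : HI F N I • v = HIval F N lam I • v := by
  rw [HI, list_hw v (hElt F N) (hval F lam)]
  · rw [HIval]
    congr 1
    rw [← List.prod_toFinset _ (Finset.sort_nodup _ _), Finset.sort_toFinset]
  · intro i hi
    rw [Finset.mem_sort, rSet, Finset.mem_image] at hi
    obtain ⟨s, hs, rfl⟩ := hi
    simp only [Finset.mem_sdiff, Finset.mem_Icc] at hs
    exact h_hw F N lam V _ (by omega)

/-- Partial sums. -/
noncomputable def TT (v : M) (a c : ℕ) : M :=
  ∑ J ∈ (Finset.Icc c N).powerset,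
    (∏ s ∈ Finset.Icc c N \ J, hval F lam (s - 1)) •
      fSet F N (insert a (insert (N + 1) J)) • v

theorem fSet_insert (a c : ℕ) (X : Finset ℕ) (hac : a < c) (hX : ∀ x ∈ X, c < x) :
    fSet F N (insert a (insert c X)) = fij F N a c * fSet F N (insert c X) := by
  have hc : c ∉ X := fun h => lt_irrefl _ (hX c h)
  have ha : a ∉ insert c X := by
    rw [Finset.mem_insert]; rintro (h | h)
    · omega
    · have := hX a h; omega
  have hle : ∀ b ∈ insert c X, a ≤ b := by
    intro b hb
    rw [Finset.mem_insert] at hb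
    rcases hb with h | h
    · omega
    · have := hX b h; omega
  rw [fSet, fSet, Finset.sort_insert _ hle ha, Finset.sort_insert _ (fun b hb => (hX b hb).le) hc,
    fList]

theorem TT_base (a : ℕ) (ha : a ≤ N) : TT F N lam v a (N + 1) = fword F N a (N - a) • v := by
  have h := fSet_insert F N a (N + 1) ∅ (by omega) (by simp)
  have h1 : fSet F N {N + 1} = 1 := by
    rw [fSet, Finset.sort_singleton, fList]
    simp
  rw [TT, Finset.Icc_eq_empty (by omega), Finset.powerset_empty, Finset.sum_singleton]
  rw [h, insert_empty_eq, h1, mul_one, fij, show N + 1 - a - 1 = N - a by omega]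
  simp

theorem TT_step (a c : ℕ) (hac : a < c) (hc : c ≤ N) :
    TT F N lam v a c = hval F lam (c - 1) • TT F N lam v a (c + 1)
      + fword F N a (c - a - 1) • TT F N lam v c (c + 1) := by
  have hI : Finset.Icc c N = insert c (Finset.Icc (c + 1) N) := by
    ext x; simp only [Finset.mem_insert, Finset.mem_Icc]; omega
  have hn : c ∉ Finset.Icc (c + 1) N := by simp
  rw [TT, hI, Finset.sum_powerset_insert hn, TT, TT, Finset.smul_sum, Finset.smul_sum]
  congr 1
  · refine Finset.sum_congr rfl fun J hJ => ?_
    rw [Finset.mem_powerset] at hJ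
    have hcJ : c ∉ J := fun h => hn (hJ h)
    rw [Finset.insert_sdiff_of_notMem _ hcJ, Finset.prod_insert (by simp), mul_smul]
  · refine Finset.sum_congr rfl fun J hJ => ?_
    rw [Finset.mem_powerset] at hJ
    have hcJ : c ∉ J := fun h => hn (hJ h)
    have e1 : insert c (Finset.Icc (c + 1) N) \ insert c J = Finset.Icc (c + 1) N \ J := by
      ext x; simp only [Finset.mem_insert, Finset.mem_Icc, Finset.mem_sdiff]
      by_cases hx : x ∈ J <;> simp [hx]; omega
    rw [e1, Finset.insert_comm (N + 1) c J, fSet_insert F N a c _ hac, mul_smul, fij,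
      smul_algebra_smul_comm]
    intro x hx
    rw [Finset.mem_insert] at hx
    rcases hx with h | h
    · omega
    · have := hJ h; rw [Finset.mem_Icc] at this; omega

theorem Theta_hw (V : HWv F N lam v) (hN : 1 ≤ N) : Theta F N • v = TT F N lam v 1 2 := by
  rw [Theta, Finset.sum_smul, TT]
  symm
  refine Finset.sum_nbij' (fun J => insert 1 (insert (N + 1) J)) (fun I => I ∩ Finset.Icc 2 N)
    ?_ ?_ ?_ ?_ ?_
  · intro J hJ
    rw [Finset.mem_powerset] at hJ
    simp only [II, Finset.mem_filter, Finset.mem_powerset]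
    refine ⟨?_, by simp, by simp⟩
    intro x hx
    simp only [Finset.mem_insert] at hx
    rw [Finset.mem_Icc]
    rcases hx with h | h | h
    · omega
    · omega
    · have := hJ h; rw [Finset.mem_Icc] at this; omega
  · intro I _
    rw [Finset.mem_powerset]; exact Finset.inter_subset_right
  · intro J hJ
    rw [Finset.mem_powerset] at hJ
    ext x
    simp only [Finset.mem_inter, Finset.mem_insert, Finset.mem_Icc]
    constructor
    · rintro ⟨h | h | h, _, _⟩
      · omega
      · omega
      · exact h
    · intro h
      have := hJ h; rw [Finset.mem_Icc] at this
      exact ⟨Or.inr (Or.inr h), this⟩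
  · intro I hI
    simp only [II, Finset.mem_filter, Finset.mem_powerset] at hI
    obtain ⟨h1, h2, h3⟩ := hI
    ext x
    simp only [Finset.mem_inter, Finset.mem_insert, Finset.mem_Icc]
    constructor
    · rintro (h | h | h)
      · rwa [h]
      · rwa [h]
      · exact h.1
    · intro h
      have := h1 h; rw [Finset.mem_Icc] at this
      by_cases e1 : x = 1
      · exact Or.inl e1
      · by_cases e2 : x = N + 1
        · exact Or.inr (Or.inl e2)
        · exact Or.inr (Or.inr ⟨h, by omega, by omega⟩)
  · intro J hJ
    rw [Finset.mem_powerset] at hJ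
    rw [mul_smul, HI_hw F N lam V, smul_algebra_smul_comm]
    congr 1
    have e1 : Finset.Icc 1 (N + 1) \ insert 1 (insert (N + 1) J) = Finset.Icc 2 N \ J := by
      ext x; simp only [Finset.mem_insert, Finset.mem_Icc, Finset.mem_sdiff]
      by_cases hx : x ∈ J <;> simp [hx]; omega
    rw [HIval, rSet, e1, Finset.prod_image]
    intro x hx y hy hxy
    simp only [Finset.coe_sdiff, Set.mem_diff, Finset.mem_coe, Finset.mem_Icc] at hx hy hxy
    omega

theorem tdat (V : HWv F N lam v) : ShRels.Tdat (qq F) (egen F N)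
    (fun i => kgen F N i ^ 2) (fun i => kinvgen F N i ^ 2) (fword F N) N lam (hval F lam)
    v (TT F N lam v) where
  ev := V.ev
  kv i h1 h2 := by
    rw [sq_hw (V.kv i h1 h2), ← zpow_natCast, ← zpow_mul, ← zpow_natCast, ← zpow_mul,
      mul_comm]
  lv i h1 h2 := by
    rw [sq_hw (kinv_hw F N lam V i h1 h2), ← zpow_natCast, ← zpow_mul, ← zpow_natCast, ← zpow_mul,
      mul_comm]
  base := TT_base F N lam
  step := TT_step F N lam

theorem qint_eq (n : ℤ) :
    qint F n = (qq F ^ 2 / (qq F ^ 4 - 1)) * (vv F ^ n - vv F ^ (-n)) := by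
  have h0 := qq_ne F
  have h1 := qq_w F
  rw [qint, div_eq_inv_mul]
  congr 1
  rw [show vv F - (vv F)⁻¹ = (qq F ^ 4 - 1) / qq F ^ 2 by
      rw [vv]; field_simp, inv_div]

theorem hval_zero : hval F lam 0 = 0 := by
  simp [hval, qint, pairσ]

theorem pair_succ (m : ℕ) (hm : 1 ≤ m) : pairσ lam m = pairσ lam (m - 1) + lam m := by
  obtain ⟨n, rfl⟩ : ∃ n, m = n + 1 := ⟨m - 1, by omega⟩
  rw [pairσ, Finset.sum_Icc_succ_top (by omega)]
  rfl

theorem hh_a (m : ℕ) (hm : 1 ≤ m) :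
    hval F lam m * (qq F * (qq F ^ 2) ^ (lam m)) + (qq F ^ 2 / (qq F ^ 4 - 1)) *
      (qq F ^ 2 * (qq F ^ 2) ^ (lam m) - (qq F ^ 2)⁻¹ * (qq F ^ 2) ^ (- lam m)) =
      hval F lam (m - 1) * ((qq F)⁻¹ * ((qq F ^ 2)⁻¹ * (qq F ^ 2) ^ (- lam m))) := by
  have h0 := qq_ne F
  have h1 := qq_w F
  have v0 := vv_ne F
  have hv : qq F ^ 2 = vv F := rfl
  have hc : ((m - 1 : ℕ) : ℤ) = m - 1 := by omega
  rw [hval, hval, pair_succ lam m hm, qint_eq, qint_eq, hc]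
  have e1 : pairσ lam (m - 1) + lam m + (m : ℤ) = (pairσ lam (m - 1) + (m - 1)) + lam m + 1 := by
    ring
  rw [e1]
  generalize pairσ lam (m - 1) + ((m : ℤ) - 1) = p
  generalize lam m = t
  simp only [hv, neg_add, neg_sub, sub_eq_add_neg, zpow_add₀ v0, zpow_neg, zpow_one, neg_neg]
  have a0 := zpow_ne_zero p v0
  have b0 := zpow_ne_zero t v0
  generalize vv F ^ p = P at *
  generalize vv F ^ t = S at *
  simp only [← sub_eq_add_neg, vv]
  field_simp
  ring

theorem hh_b (m : ℕ) (hm : 1 ≤ m) (hl : pairσ lam m = 1 - (m : ℤ)) :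
    (qq F ^ 2 / (qq F ^ 4 - 1)) * ((qq F ^ 2) ^ (lam m) - (qq F ^ 2) ^ (- lam m)) =
      hval F lam (m - 1) * ((qq F)⁻¹ * (qq F ^ 2) ^ (- lam m)) := by
  have h0 := qq_ne F
  have h1 := qq_w F
  have v0 := vv_ne F
  have hv : qq F ^ 2 = vv F := rfl
  have hc : ((m - 1 : ℕ) : ℤ) = m - 1 := by omega
  have hp := pair_succ lam m hm
  rw [hval, qint_eq, hc]
  have e1 : pairσ lam (m - 1) + ((m : ℤ) - 1) = - lam m := by omega
  rw [e1]
  generalize lam m = t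
  simp only [hv, neg_add, neg_sub, sub_eq_add_neg, zpow_add₀ v0, zpow_neg, zpow_one, neg_neg]
  have b0 := zpow_ne_zero t v0
  generalize vv F ^ t = S at *
  simp only [← sub_eq_add_neg, vv]
  field_simp
  ring

end conc

theorem fin_thm (F : Type) [Field F] (N : ℕ) (hN : 1 ≤ N) (lam : ℕ → ℤ) {M : Type}
    [AddCommGroup M] [Module (Uq F N) M] (v : M) (ev : ∀ i, egen F N i • v = 0)
    (kv : ∀ i, 1 ≤ i → i ≤ N →
      kgen F N i • v = algebraMap (kk F) (Uq F N) (qq F ^ lam i) • v) :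
    (∀ k, 1 ≤ k → k ≤ N - 1 → egen F N k • (Theta F N • v) = 0) ∧
    (pairσ lam N = 1 - (N : ℤ) →
      ∀ k, 1 ≤ k → k ≤ N → egen F N k • (Theta F N • v) = 0) := by
  let _ : Module (kk F) M := Module.compHom M (algebraMap (kk F) (Uq F N))
  have _ : IsScalarTower (kk F) (Uq F N) M := IsScalarTower.of_algebraMap_smul fun _ _ => rfl
  have V : HWv F N lam v := ⟨ev, kv⟩
  rw [Theta_hw F N lam V hN]
  have ha : ∀ k, 1 ≤ k → k ≤ N - 1 → egen F N k • TT F N lam v 1 2 = 0 := fun k h1 h2 =>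
    ShRels.main_a (shRels F N) (tdat F N lam V) k h1 (by omega) (hh_a F lam k h1) (hval_zero F lam)
  refine ⟨ha, fun hl k h1 h2 => ?_⟩
  rcases Nat.lt_or_ge k N with h3 | h3
  · exact ha k h1 (by omega)
  · obtain rfl : k = N := by omega
    exact ShRels.main_b (shRels F k) (tdat F k lam V) h1 (hh_b F lam k h1 hl) (hval_zero F lam)

/-- with `Θ_η = Σ_{I ∈ 𝕀} f_I H_I`:
(a) for every weight `λ` and `1 ≤ k ≤ N-1`, `e_k Θ_η v_λ = 0` in `M(λ)`;
(b) if moreover `(λ,η) = 1-N`, then `e_k Θ_η v_λ = 0` for all `1 ≤ k ≤ N`,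
so `Θ_η v_λ` is annihilated by `e_1, …, e_N` and `Θ_η` is a Shapovalov element
for the pair `(η,1)`. -/
theorem stmt5 (F : Type) [Field F] (N : ℕ) (hN : 1 ≤ N) (lam : ℕ → ℤ) :
    (∀ k, 1 ≤ k → k ≤ N - 1 →
        egen F N k • (Theta F N • hw F N lam) = 0) ∧
    (pairσ lam N = 1 - (N : ℤ) →
      ∀ k, 1 ≤ k → k ≤ N →
        egen F N k • (Theta F N • hw F N lam) = 0) := by
  exact fin_thm F N hN lam (hw F N lam) (e_hw F N lam) (k_hw F N lam)
end

section
/- Assume N ≥ 2. Let I ∈ S_1 and let λ be any weight. Then e_1 (f_I H_I + f_{I⁻} H_{I⁻}) v_λ = 0 in M(λ). -/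
section aux7
open FreeAlgebra

theorem aux7_qne (F : Type) [Field F] : qq F ≠ 0 := RatFunc.X_ne_zero

theorem aux7_q4 (F : Type) [Field F] : qq F ^ 4 ≠ 1 := by
  intro h
  have h2 : (algebraMap (Polynomial F) (RatFunc F)) (Polynomial.X ^ 4)
      = (algebraMap (Polynomial F) (RatFunc F)) 1 := by
    rw [map_pow, RatFunc.algebraMap_X, map_one]; exact h
  have h3 := RatFunc.algebraMap_injective F h2
  have h4 := congrArg Polynomial.natDegree h3
  rw [Polynomial.natDegree_X_pow, Polynomial.natDegree_one] at h4
  omega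

theorem aux7_rel (F : Type) [Field F] (N : ℕ) {a b : FreeAlgebra (kk F) (Gen N)}
    (h : UqRel F N a b) :
    RingQuot.mkAlgHom (kk F) (UqRel F N) a = RingQuot.mkAlgHom (kk F) (UqRel F N) b :=
  RingQuot.mkAlgHom_rel (kk F) h

theorem aux7_kkinv (F : Type) [Field F] (N : ℕ) (i : ℕ) (h1 : 1 ≤ i) (h2 : i ≤ N) :
    kgen F N i * kinvgen F N i = 1 := by
  have := aux7_rel F N (UqRel.kkinv ⟨i - 1, by omega⟩)
  rw [map_mul, map_one] at this
  simpa [kgen, kinvgen, h1, h2, gen] using this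

theorem aux7_kinvk (F : Type) [Field F] (N : ℕ) (i : ℕ) (h1 : 1 ≤ i) (h2 : i ≤ N) :
    kinvgen F N i * kgen F N i = 1 := by
  have := aux7_rel F N (UqRel.kinvk ⟨i - 1, by omega⟩)
  rw [map_mul, map_one] at this
  simpa [kgen, kinvgen, h1, h2, gen] using this

theorem aux7_ef (F : Type) [Field F] (N : ℕ) (i : ℕ) (h1 : 1 ≤ i) (h2 : i ≤ N) :
    egen F N i * fgen F N i = fgen F N i * egen F N i +
      ((qq F ^ 2 - qq F ^ (-2 : ℤ))⁻¹) • (kgen F N i ^ 2 - kinvgen F N i ^ 2) := by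
  have := aux7_rel F N (UqRel.ef ⟨i - 1, by omega⟩ ⟨i - 1, by omega⟩)
  rw [if_pos rfl, map_sub, map_mul, map_mul, map_smul, map_sub, map_pow, map_pow,
    sub_eq_iff_eq_add'] at this
  simpa only [egen, fgen, kgen, kinvgen, h1, h2, gen, and_self, dite_true] using this

theorem aux7_ef_ne (F : Type) [Field F] (N : ℕ) (j : ℕ) (h1 : 2 ≤ j) :
    Commute (egen F N 1) (fgen F N j) := by
  unfold egen fgen
  split_ifs with a b
  · have := aux7_rel F N (UqRel.ef ⟨0, by omega⟩ ⟨j - 1, by omega⟩)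
    rw [if_neg (by simp; omega), map_sub, map_mul, map_mul, map_zero, sub_eq_zero] at this
    exact this
  all_goals simp

theorem aux7_kf (F : Type) [Field F] (N : ℕ) (hN : 1 ≤ N) (j : ℕ) (hj : 1 ≤ j) :
    kgen F N 1 * fgen F N j = (qq F ^ (-cartan 1 j)) • (fgen F N j * kgen F N 1) := by
  by_cases b : j ≤ N
  · have := aux7_rel F N (UqRel.kf ⟨0, by omega⟩ ⟨j - 1, by omega⟩)
    rw [map_smul, map_mul, map_mul] at this
    have e : kgen F N 1 * fgen F N j * kinvgen F N 1 = (qq F ^ (-cartan 1 j)) • fgen F N j := by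
      have hj' : j - 1 + 1 = j := by omega
      simp only [hj'] at this
      simpa only [fgen, kgen, kinvgen, hj, b, hN, le_refl, gen, and_self, dite_true] using this
    calc kgen F N 1 * fgen F N j
        = kgen F N 1 * fgen F N j * (kinvgen F N 1 * kgen F N 1) := by
          rw [aux7_kinvk F N 1 le_rfl hN, mul_one]
      _ = _ := by rw [← mul_assoc, e, smul_mul_assoc]
  · simp [fgen, b]

theorem aux7_kf2 (F : Type) [Field F] (N : ℕ) (hN : 1 ≤ N) :
    kgen F N 1 * fgen F N 2 = qq F • (fgen F N 2 * kgen F N 1) := by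
  have := aux7_kf F N hN 2 (by norm_num)
  simpa [cartan] using this

theorem aux7_kf3 (F : Type) [Field F] (N : ℕ) (hN : 1 ≤ N) (j : ℕ) (hj : 3 ≤ j) :
    Commute (kgen F N 1) (fgen F N j) := by
  have := aux7_kf F N hN j (by omega)
  have c : cartan 1 j = 0 := by
    unfold cartan
    rw [if_neg (by omega), if_neg (by omega)]
  rw [c, neg_zero, zpow_zero, one_smul] at this
  exact this

theorem aux7_fword_comm (F : Type) [Field F] (N : ℕ) (x : Uq F N) (m : ℕ)
    (hx : ∀ j, m ≤ j → Commute x (fgen F N j)) (i : ℕ) (hi : m ≤ i) (d : ℕ) :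
    Commute x (fword F N i d) := by
  induction d with
  | zero => exact hx i hi
  | succ d ih =>
    have h := hx (i + 1 + d) (by omega)
    exact ((ih.mul_right h).smul_right _).sub_right ((h.mul_right ih).smul_right _)

theorem aux7_fList_comm (F : Type) [Field F] (N : ℕ) (x : Uq F N) (m : ℕ)
    (hx : ∀ j, m ≤ j → Commute x (fgen F N j)) (l : List ℕ) (hl : ∀ i ∈ l, m ≤ i) :
    Commute x (fList F N l) := by
  induction l with
  | nil => exact Commute.one_right x
  | cons a t ih =>
    cases t with
    | nil => exact Commute.one_right x
    | cons b r =>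
      have := ih (fun i hi => hl i (List.mem_cons_of_mem _ hi))
      exact (aux7_fword_comm F N x m hx a (hl a (by simp)) _).mul_right this

theorem aux7_kfword (F : Type) [Field F] (N : ℕ) (hN : 1 ≤ N) (d : ℕ) :
    kgen F N 1 * fword F N 2 d = qq F • (fword F N 2 d * kgen F N 1) := by
  induction d with
  | zero => exact aux7_kf2 F N hN
  | succ d ih =>
    have h := aux7_kf3 F N hN (2 + 1 + d) (by omega)
    have e1 : kgen F N 1 * (fword F N 2 d * fgen F N (2 + 1 + d))
        = qq F • (fword F N 2 d * fgen F N (2 + 1 + d) * kgen F N 1) := by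
      rw [← mul_assoc, ih, smul_mul_assoc, mul_assoc, h.eq, mul_assoc]
    have e2 : kgen F N 1 * (fgen F N (2 + 1 + d) * fword F N 2 d)
        = qq F • (fgen F N (2 + 1 + d) * fword F N 2 d * kgen F N 1) := by
      rw [← mul_assoc, h.eq, mul_assoc, ih, mul_smul_comm, mul_assoc]
    simp only [fword, mul_sub, sub_mul, mul_smul_comm, smul_mul_assoc, smul_sub, e1, e2]
    rw [smul_comm (qq F)⁻¹ (qq F)]

theorem aux7_inv {K U : Type*} [Field K] [Ring U] [Algebra K U] {k k' x : U} {q : K}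
    (hq : q ≠ 0) (h1 : k * k' = 1) (h2 : k' * k = 1) (h : k * x = q • (x * k)) :
    k' * x = q⁻¹ • (x * k') := by
  have : x * k' = q • (k' * x) := by
    calc x * k' = k' * (k * x) * k' := by rw [← mul_assoc, h2, one_mul]
      _ = q • (k' * x) := by
        rw [h, mul_smul_comm, smul_mul_assoc, ← mul_assoc, mul_assoc, h1, mul_one]
  rw [this, smul_smul, inv_mul_cancel₀ hq, one_smul]

theorem aux7_base {K U : Type*} [Field K] [Ring U] [Algebra K U] {e f g k k' : U} {q : K}
    (hq : q ≠ 0) (hq4 : q ^ 4 ≠ 1)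
    (hef : e * f = f * e + ((q ^ 2 - q ^ (-2 : ℤ))⁻¹) • (k ^ 2 - k' ^ 2))
    (heg : e * g = g * e) (hk : k * g = q • (g * k)) (hk' : k' * g = q⁻¹ • (g * k')) :
    e * (q • (f * g) - q⁻¹ • (g * f)) =
      (q • (f * g) - q⁻¹ • (g * f)) * e + q • (g * k ^ 2) := by
  have hk2 : k ^ 2 * g = q ^ 2 • (g * k ^ 2) := by
    rw [pow_two, mul_assoc, hk, mul_smul_comm, ← mul_assoc, hk, smul_mul_assoc, smul_smul,
      mul_assoc, pow_two]
  have hk2' : k' ^ 2 * g = (q⁻¹) ^ 2 • (g * k' ^ 2) := by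
    rw [pow_two, mul_assoc, hk', mul_smul_comm, ← mul_assoc, hk', smul_mul_assoc, smul_smul,
      mul_assoc, pow_two]
  have hd : q ^ 2 - q ^ (-2 : ℤ) ≠ 0 := by
    intro h
    apply hq4
    have : q ^ (-2 : ℤ) = (q ^ 2)⁻¹ := by rw [zpow_neg]; norm_cast
    rw [this, sub_eq_zero] at h
    field_simp at h
    rw [← h]
  set D := (q ^ 2 - q ^ (-2 : ℤ)) with hD
  have e1 : e * (f * g) = f * g * e + (D⁻¹ * q ^ 2) • (g * k ^ 2)
      - (D⁻¹ * (q⁻¹) ^ 2) • (g * k' ^ 2) := by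
    rw [← mul_assoc, hef, add_mul, mul_assoc f e g, heg, smul_mul_assoc, sub_mul, hk2, hk2',
      smul_sub, smul_smul, smul_smul, ← mul_assoc, add_sub_assoc]
  have e2 : e * (g * f) = g * f * e + D⁻¹ • (g * k ^ 2) - D⁻¹ • (g * k' ^ 2) := by
    rw [← mul_assoc, heg, mul_assoc, hef, mul_add, mul_smul_comm, mul_sub, smul_sub,
      ← mul_assoc, add_sub_assoc]
  have c : q * (D⁻¹ * q ^ 2) - q⁻¹ * D⁻¹ = q := by
    have : D = q ^ 2 - (q ^ 2)⁻¹ := by rw [hD, zpow_neg]; norm_cast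
    have h3 : q * (D⁻¹ * q ^ 2) - q⁻¹ * D⁻¹ = q * D * D⁻¹ := by
      rw [this]; field_simp
    rw [h3, mul_assoc, mul_inv_cancel₀ hd, mul_one]
  have c2 : q * (D⁻¹ * (q⁻¹) ^ 2) = q⁻¹ * D⁻¹ := by field_simp
  rw [mul_sub, mul_smul_comm, mul_smul_comm, e1, e2, sub_mul, smul_mul_assoc, smul_mul_assoc]
  nth_rewrite 7 [← c]
  simp only [smul_add, smul_sub, smul_smul, c2, sub_smul]
  abel

theorem aux7_efword (F : Type) [Field F] (N : ℕ) (hN : 1 ≤ N) (d : ℕ) :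
    egen F N 1 * fword F N 1 (d + 1) = fword F N 1 (d + 1) * egen F N 1 +
      qq F • (fword F N 2 d * kgen F N 1 ^ 2) := by
  induction d with
  | zero =>
    have h1 := aux7_kkinv F N 1 le_rfl hN
    have h2 := aux7_kinvk F N 1 le_rfl hN
    have h := aux7_kf2 F N hN
    exact aux7_base (aux7_qne F) (aux7_q4 F) (aux7_ef F N 1 le_rfl hN)
      (aux7_ef_ne F N 2 le_rfl).eq h (aux7_inv (aux7_qne F) h1 h2 h)
  | succ d ih =>
    have he := aux7_ef_ne F N (2 + 1 + d) (by omega)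
    have hk := (aux7_kf3 F N hN (2 + 1 + d) (by omega)).pow_left 2
    have i1 : fword F N 1 (d + 1 + 1) = qq F • (fword F N 1 (d + 1) * fgen F N (2 + 1 + d)) -
        (qq F)⁻¹ • (fgen F N (2 + 1 + d) * fword F N 1 (d + 1)) := by
      have : 2 + 1 + d = 1 + 1 + (d + 1) := by omega
      rw [this]; rfl
    have i2 : fword F N 2 (d + 1) = qq F • (fword F N 2 d * fgen F N (2 + 1 + d)) -
        (qq F)⁻¹ • (fgen F N (2 + 1 + d) * fword F N 2 d) := rfl
    rw [i1, i2]
    generalize fword F N 1 (d + 1) = Y at *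
    generalize fword F N 2 d = X at *
    generalize fgen F N (2 + 1 + d) = g at *
    have e1 : egen F N 1 * (Y * g) = Y * g * egen F N 1
        + qq F • (X * g * kgen F N 1 ^ 2) := by
      rw [← mul_assoc, ih, add_mul, mul_assoc Y, he.eq, smul_mul_assoc, mul_assoc X, hk.eq,
        ← mul_assoc, ← mul_assoc]
    have e2 : egen F N 1 * (g * Y) = g * Y * egen F N 1
        + qq F • (g * X * kgen F N 1 ^ 2) := by
      rw [← mul_assoc, he.eq, mul_assoc, ih, mul_add, mul_smul_comm, ← mul_assoc, ← mul_assoc]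
    simp only [mul_sub, sub_mul, mul_smul_comm, smul_mul_assoc, smul_sub, e1, e2, smul_add]
    rw [smul_comm (qq F)⁻¹ (qq F)]
    abel

theorem aux7_sc {K U M : Type*} [Field K] [Ring U] [Algebra K U] [AddCommGroup M] [Module U M]
    (x : U) (b : K) (m : M) :
    x • (algebraMap K U b • m) = algebraMap K U b • (x • m) := by
  rw [← mul_smul, ← mul_smul, Algebra.commutes]

theorem aux7_ss {K U M : Type*} [Field K] [Ring U] [Algebra K U] [AddCommGroup M] [Module U M]
    (b c : K) (m : M) :
    algebraMap K U b • (algebraMap K U c • m) = algebraMap K U (b * c) • m := by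
  rw [← mul_smul, map_mul]

theorem aux7_sa {K U M : Type*} [Field K] [Ring U] [Algebra K U] [AddCommGroup M] [Module U M]
    (b : K) (x : U) (m : M) : (b • x) • m = algebraMap K U b • (x • m) := by
  rw [← mul_smul, Algebra.smul_def]

/-- abstract final computation -/
theorem aux7_final {K U M : Type*} [Field K] [Ring U] [Algebra K U] [AddCommGroup M] [Module U M]
    {e f k k' X Y R P h : U} {w : M} {q a c D : K} (hq : q ≠ 0) (ha : a ≠ 0)
    (hef : e * f = f * e + D • (k ^ 2 - k' ^ 2))
    (heX : e * X = X * e) (heR : e * R = R * e)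
    (hkX : k * X = q • (X * k)) (hkX' : k' * X = q⁻¹ • (X * k'))
    (hkR : k * R = R * k) (hkR' : k' * R = R * k')
    (heY : e * Y = Y * e + q • (X * k ^ 2))
    (hh : h = (-q⁻¹ * D) • (k' ^ 2 * (q ^ 2 • k ^ 2 - (q ^ 2)⁻¹ • k' ^ 2)))
    (hew : e • w = 0) (hkw : k • w = algebraMap K U a • w)
    (hkw' : k' • w = algebraMap K U a⁻¹ • w) (hPw : P • w = algebraMap K U c • w) :
    e • ((f * (X * R) * P + Y * R * (h * P)) • w) = 0 := by
  have k2w : k ^ 2 • w = algebraMap K U (a * a) • w := by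
    rw [pow_two, mul_smul, hkw, aux7_sc, hkw, aux7_ss]
  have k2w' : k' ^ 2 • w = algebraMap K U (a⁻¹ * a⁻¹) • w := by
    rw [pow_two, mul_smul, hkw', aux7_sc, hkw', aux7_ss]
  have hhw : h • w = algebraMap K U
      ((-q⁻¹ * D) * ((q ^ 2 * (a * a) - (q ^ 2)⁻¹ * (a⁻¹ * a⁻¹)) * (a⁻¹ * a⁻¹))) • w := by
    rw [hh, aux7_sa, mul_smul, sub_smul (q ^ 2 • k ^ 2), aux7_sa, aux7_sa, k2w, k2w', aux7_ss,
      aux7_ss, ← sub_smul, ← map_sub, aux7_sc, k2w', aux7_ss, aux7_ss, mul_assoc (-q⁻¹ * D)]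
  obtain ⟨z, hz⟩ : ∃ z, z = X • (R • w) := ⟨_, rfl⟩
  have kz : k • z = algebraMap K U (q * a) • z := by
    rw [hz, ← mul_smul, hkX, aux7_sa, mul_smul, ← mul_smul k, hkR, mul_smul, hkw, aux7_sc, aux7_sc,
      aux7_ss]
  have kz' : k' • z = algebraMap K U (q⁻¹ * a⁻¹) • z := by
    rw [hz, ← mul_smul, hkX', aux7_sa, mul_smul, ← mul_smul k', hkR', mul_smul, hkw', aux7_sc,
      aux7_sc, aux7_ss]
  have ez : e • z = 0 := by
    rw [hz, ← mul_smul, heX, mul_smul, ← mul_smul e, heR, mul_smul, hew, smul_zero, smul_zero]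
  have t1 : e • (f • z) =
      algebraMap K U (D * ((q * a) * (q * a) - (q⁻¹ * a⁻¹) * (q⁻¹ * a⁻¹))) • z := by
    rw [← mul_smul, hef, add_smul, mul_smul, ez, smul_zero, zero_add, aux7_sa, sub_smul,
      pow_two, pow_two, mul_smul, mul_smul, kz, kz', aux7_sc, aux7_sc, kz, kz', aux7_ss, aux7_ss,
      ← sub_smul, ← map_sub, aux7_ss]
  have t2 : e • (Y • (R • w)) = algebraMap K U (q * (a * a)) • z := by
    have hk2R : k ^ 2 * R = R * k ^ 2 := ((show Commute k R from hkR).pow_left 2).eq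
    rw [hz, ← mul_smul, heY, add_smul, mul_smul, ← mul_smul e, heR, mul_smul, hew, smul_zero,
      smul_zero, zero_add, aux7_sa, mul_smul, ← mul_smul (k ^ 2), hk2R, mul_smul, k2w, aux7_sc,
      aux7_sc, aux7_ss]
  rw [add_smul, smul_add]
  have u1 : e • ((f * (X * R) * P) • w) = algebraMap K U
      (c * (D * ((q * a) * (q * a) - (q⁻¹ * a⁻¹) * (q⁻¹ * a⁻¹)))) • z := by
    rw [mul_smul, hPw, aux7_sc, aux7_sc, mul_smul, mul_smul X, ← hz, t1, aux7_ss]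
  have u2 : e • ((Y * R * (h * P)) • w) = algebraMap K U
      (c * ((-q⁻¹ * D) * ((q ^ 2 * (a * a) - (q ^ 2)⁻¹ * (a⁻¹ * a⁻¹)) * (a⁻¹ * a⁻¹)))
        * (q * (a * a))) • z := by
    rw [mul_smul, mul_smul h, hPw, aux7_sc, hhw, aux7_ss, aux7_sc, aux7_sc, mul_smul, t2, aux7_ss]
  rw [u1, u2, ← add_smul, ← map_add]
  have : c * (D * ((q * a) * (q * a) - (q⁻¹ * a⁻¹) * (q⁻¹ * a⁻¹))) +
      c * ((-q⁻¹ * D) * ((q ^ 2 * (a * a) - (q ^ 2)⁻¹ * (a⁻¹ * a⁻¹)) * (a⁻¹ * a⁻¹)))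
        * (q * (a * a)) = 0 := by
    field_simp
    ring
  rw [this, map_zero, zero_smul]

/-- `x` acts on `w` by a scalar. -/
def Aux7Eig (K : Type*) {U M : Type*} [Field K] [Ring U] [Algebra K U] [AddCommGroup M]
    [Module U M] (w : M) (x : U) : Prop :=
  ∃ c : K, x • w = algebraMap K U c • w

section
variable {K U M : Type*} [Field K] [Ring U] [Algebra K U] [AddCommGroup M] [Module U M] {w : M}
  {x y : U}

theorem Aux7Eig.mul (hx : Aux7Eig K w x) (hy : Aux7Eig K w y) : Aux7Eig K w (x * y) := by
  obtain ⟨a, ha⟩ := hx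
  obtain ⟨b, hb⟩ := hy
  exact ⟨b * a, by rw [mul_smul, hb, aux7_sc, ha, aux7_ss]⟩

theorem Aux7Eig.sub (hx : Aux7Eig K w x) (hy : Aux7Eig K w y) : Aux7Eig K w (x - y) := by
  obtain ⟨a, ha⟩ := hx
  obtain ⟨b, hb⟩ := hy
  exact ⟨a - b, by rw [sub_smul, ha, hb, ← sub_smul, map_sub]⟩

theorem Aux7Eig.smul (c : K) (hx : Aux7Eig K w x) : Aux7Eig K w (c • x) := by
  obtain ⟨a, ha⟩ := hx
  exact ⟨c * a, by rw [aux7_sa, ha, aux7_ss]⟩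

theorem aux7Eig_one : Aux7Eig K w (1 : U) := ⟨1, by rw [map_one]⟩

theorem aux7Eig_zero : Aux7Eig K w (0 : U) := ⟨0, by rw [map_zero]⟩

theorem aux7Eig_list (g : ℕ → U) (hg : ∀ j, Aux7Eig K w (g j)) (l : List ℕ) :
    Aux7Eig K w (l.map g).prod := by
  induction l with
  | nil => exact aux7Eig_one
  | cons a t ih =>
    rw [List.map_cons, List.prod_cons]
    exact (hg a).mul ih

theorem aux7_inv_act {k k' : U} {a : K} (ha : a ≠ 0) (h : k' * k = 1)
    (hk : k • w = algebraMap K U a • w) : k' • w = algebraMap K U a⁻¹ • w := by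
  have h2 : w = algebraMap K U a • (k' • w) := by
    rw [← aux7_sc, ← hk, ← mul_smul, h, one_smul]
  conv_rhs => rw [h2]
  rw [aux7_ss, inv_mul_cancel₀ ha, map_one, one_smul]

end

theorem aux7_ew (F : Type) [Field F] (N : ℕ) (lam : ℕ → ℤ) (j : ℕ) (h1 : 1 ≤ j) (h2 : j ≤ N) :
    egen F N j • hw F N lam = 0 := by
  unfold hw
  rw [← Submodule.Quotient.mk_smul, Submodule.Quotient.mk_eq_zero, smul_eq_mul, mul_one]
  exact Submodule.subset_span (Or.inl ⟨j, h1, h2, rfl⟩)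

theorem aux7_kw (F : Type) [Field F] (N : ℕ) (lam : ℕ → ℤ) (j : ℕ) (h1 : 1 ≤ j) (h2 : j ≤ N) :
    kgen F N j • hw F N lam = algebraMap (kk F) (Uq F N) (qq F ^ lam j) • hw F N lam := by
  unfold hw
  rw [← Submodule.Quotient.mk_smul, ← Submodule.Quotient.mk_smul, Submodule.Quotient.eq,
    smul_eq_mul, mul_one, smul_eq_mul, mul_one]
  exact Submodule.subset_span (Or.inr ⟨j, h1, h2, rfl⟩)

theorem aux7_kw' (F : Type) [Field F] (N : ℕ) (lam : ℕ → ℤ) (j : ℕ) (h1 : 1 ≤ j) (h2 : j ≤ N) :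
    kinvgen F N j • hw F N lam =
      algebraMap (kk F) (Uq F N) (qq F ^ lam j)⁻¹ • hw F N lam :=
  aux7_inv_act (zpow_ne_zero _ (aux7_qne F)) (aux7_kinvk F N j h1 h2) (aux7_kw F N lam j h1 h2)

theorem aux7Eig_h (F : Type) [Field F] (N : ℕ) (lam : ℕ → ℤ) (i : ℕ) :
    Aux7Eig (kk F) (hw F N lam) (hElt F N i) := by
  have hk : ∀ j, Aux7Eig (kk F) (hw F N lam) (kgen F N j) := by
    intro j
    by_cases h : 1 ≤ j ∧ j ≤ N
    · exact ⟨_, aux7_kw F N lam j h.1 h.2⟩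
    · unfold kgen; rw [dif_neg h]; exact aux7Eig_zero
  have hk' : ∀ j, Aux7Eig (kk F) (hw F N lam) (kinvgen F N j) := by
    intro j
    by_cases h : 1 ≤ j ∧ j ≤ N
    · exact ⟨_, aux7_kw' F N lam j h.1 h.2⟩
    · unfold kinvgen; rw [dif_neg h]; exact aux7Eig_zero
  have h1 : Aux7Eig (kk F) (hw F N lam) (Kσ F N i) := by
    unfold Kσ; rw [pow_two]
    have := aux7Eig_list (fun j => kgen F N (j + 1)) (fun j => hk _) (List.range i)
    exact this.mul this
  have h2 : Aux7Eig (kk F) (hw F N lam) (KσInv F N i) := by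
    unfold KσInv; rw [pow_two]
    have := aux7Eig_list (fun j => kinvgen F N (j + 1)) (fun j => hk' _) (List.range i)
    exact this.mul this
  exact (h2.mul ((h1.smul _).sub (h2.smul _))).smul _

theorem aux7_h1 (F : Type) [Field F] (N : ℕ) :
    hElt F N 1 = (-(qq F)⁻¹ * (qq F ^ 2 - qq F ^ (-2 : ℤ))⁻¹) • (kinvgen F N 1 ^ 2 *
      (qq F ^ 2 • kgen F N 1 ^ 2 - (qq F ^ 2)⁻¹ • kinvgen F N 1 ^ 2)) := by
  have : qq F ^ (-2 : ℤ) = (qq F ^ 2)⁻¹ := by rw [zpow_neg]; norm_cast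
  simp [hElt, Kσ, KσInv, kσ, kσinv, vv, this]

end aux7

/-- assume `N ≥ 2`. For `I ∈ S_1` and any weight `λ`,
`e_1 (f_I H_I + f_{I⁻} H_{I⁻}) v_λ = 0` in `M(λ)`, where `I⁻ = I \ {2}`. -/
theorem stmt7 (F : Type) [Field F] (N : ℕ) (hN : 2 ≤ N) (lam : ℕ → ℤ)
    (I : Finset ℕ) (hI : I ∈ II N) (h1 : (1 : ℕ) ∈ I) (h2 : (2 : ℕ) ∈ I) :
    egen F N 1 •
      ((fSet F N I * HI F N I + fSet F N (I.erase 2) * HI F N (I.erase 2)) •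
        hw F N lam) = 0 := by
  have hN1 : 1 ≤ N := by omega
  obtain ⟨hsub, -, hNI⟩ : I ⊆ Finset.Icc 1 (N + 1) ∧ 1 ∈ I ∧ N + 1 ∈ I := by
    simpa [II] using hI
  obtain ⟨J, hJdef⟩ : ∃ J, J = I.filter (fun s => 3 ≤ s) := ⟨_, rfl⟩
  have hJ3 : ∀ s ∈ J, 3 ≤ s := by
    intro s hs; rw [hJdef] at hs; exact (Finset.mem_filter.mp hs).2
  have hJ : ∀ s, s ∈ J ↔ s ∈ I ∧ 3 ≤ s := by
    intro s; rw [hJdef, Finset.mem_filter]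
  have hI' : ∀ s ∈ I, 1 ≤ s ∧ s ≤ N + 1 := fun s hs => Finset.mem_Icc.mp (hsub hs)
  have hIJ : I = insert 1 (insert 2 J) := by
    ext s
    simp only [Finset.mem_insert, hJ]
    constructor
    · intro hs
      have := hI' s hs
      by_cases a : s = 1
      · exact Or.inl a
      by_cases b : s = 2
      · exact Or.inr (Or.inl b)
      · exact Or.inr (Or.inr ⟨hs, by omega⟩)
    · rintro (rfl | rfl | h)
      · exact h1
      · exact h2
      · exact h.1
  have hIJ2 : I.erase 2 = insert 1 J := by
    ext s
    rw [Finset.mem_erase, hIJ]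
    simp only [Finset.mem_insert]
    constructor
    · rintro ⟨a, b | b | b⟩
      · exact Or.inl b
      · exact absurd b a
      · exact Or.inr b
    · rintro (b | b)
      · exact ⟨by omega, Or.inl b⟩
      · have := hJ3 s b
        exact ⟨by omega, Or.inr (Or.inr b)⟩
  have s1 : I.sort (· ≤ ·) = 1 :: 2 :: J.sort (· ≤ ·) := by
    rw [hIJ, Finset.sort_insert, Finset.sort_insert]
    · intro b hb; have := hJ3 b hb; omega
    · intro hb; have := hJ3 _ hb; omega
    · intro b hb
      rcases Finset.mem_insert.mp hb with rfl | hb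
      · norm_num
      · have := hJ3 b hb; omega
    · intro hb
      rcases Finset.mem_insert.mp hb with hb | hb
      · omega
      · have := hJ3 _ hb; omega
  have s2 : (I.erase 2).sort (· ≤ ·) = 1 :: J.sort (· ≤ ·) := by
    rw [hIJ2, Finset.sort_insert]
    · intro b hb; have := hJ3 b hb; omega
    · intro hb; have := hJ3 _ hb; omega
  have hr : rSet N (I.erase 2) = insert 1 (rSet N I) := by
    ext t
    simp only [rSet, Finset.mem_image, Finset.mem_insert, Finset.mem_sdiff, Finset.mem_Icc,
      Finset.mem_erase]
    constructor
    · rintro ⟨s, ⟨hs, hn⟩, rfl⟩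
      by_cases b : s = 2
      · left; omega
      · right; exact ⟨s, ⟨hs, fun h => hn ⟨b, h⟩⟩, rfl⟩
    · rintro (rfl | ⟨s, ⟨hs, hn⟩, rfl⟩)
      · exact ⟨2, ⟨by omega, fun h => h.1 rfl⟩, rfl⟩
      · exact ⟨s, ⟨hs, fun h => hn h.2⟩, rfl⟩
  have hr2 : ∀ t ∈ rSet N I, 2 ≤ t := by
    intro t ht
    simp only [rSet, Finset.mem_image, Finset.mem_sdiff, Finset.mem_Icc] at ht
    obtain ⟨s, ⟨hs, hn⟩, rfl⟩ := ht
    have a : s ≠ 1 := fun h => hn (h ▸ h1)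
    have b : s ≠ 2 := fun h => hn (h ▸ h2)
    omega
  have hH : HI F N (I.erase 2) = hElt F N 1 * HI F N I := by
    unfold HI
    rw [hr, Finset.sort_insert, List.map_cons, List.prod_cons]
    · intro b hb; have := hr2 b hb; omega
    · intro hb; have := hr2 _ hb; omega
  have hl : ∀ s ∈ J.sort (· ≤ ·), 3 ≤ s := fun s hs => hJ3 s ((Finset.mem_sort _).mp hs)
  have hne : J.sort (· ≤ ·) ≠ [] := by
    intro h
    have : N + 1 ∈ J.sort (· ≤ ·) := (Finset.mem_sort _).mpr ((hJ _).mpr ⟨hNI, by omega⟩)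
    rw [h] at this
    simp at this
  obtain ⟨c, hc⟩ : Aux7Eig (kk F) (hw F N lam) (HI F N I) :=
    aux7Eig_list (hElt F N) (aux7Eig_h F N lam) _
  unfold fSet
  rw [hH, s1, s2]
  generalize J.sort (· ≤ ·) = l at hl hne
  obtain ⟨s, r, rfl⟩ := List.exists_cons_of_ne_nil hne
  have hs : 3 ≤ s := hl s (by simp)
  obtain ⟨d, rfl⟩ : ∃ d, s = d + 3 := ⟨s - 3, by omega⟩
  have f1 : fList F N (1 :: 2 :: (d + 3) :: r) =
      fgen F N 1 * (fword F N 2 d * fList F N ((d + 3) :: r)) := by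
    have : d + 3 - 2 - 1 = d := by omega
    simp only [fList, fij, this]
    rfl
  have f2 : fList F N (1 :: (d + 3) :: r) =
      fword F N 1 (d + 1) * fList F N ((d + 3) :: r) := by
    have : d + 3 - 1 - 1 = d + 1 := by omega
    simp only [fList, fij, this]
  rw [f1, f2]
  have hkki := aux7_kkinv F N 1 le_rfl hN1
  have hkik := aux7_kinvk F N 1 le_rfl hN1
  have hkR := (aux7_fList_comm F N _ 3 (aux7_kf3 F N hN1) _ hl).eq
  have hkR' : kinvgen F N 1 * fList F N ((d + 3) :: r) =
      fList F N ((d + 3) :: r) * kinvgen F N 1 := by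
    have := aux7_inv (q := (1 : kk F)) (x := fList F N ((d + 3) :: r)) one_ne_zero hkki hkik
      (by rw [one_smul]; exact hkR)
    rwa [inv_one, one_smul] at this
  have hkX := aux7_kfword F N hN1 d
  exact aux7_final (aux7_qne F) (zpow_ne_zero _ (aux7_qne F)) (aux7_ef F N 1 le_rfl hN1)
    (aux7_fword_comm F N _ 2 (aux7_ef_ne F N) 2 le_rfl d).eq
    (aux7_fList_comm F N _ 3 (fun j hj => aux7_ef_ne F N j (by omega)) _ hl).eq
    hkX (aux7_inv (aux7_qne F) hkki hkik hkX) hkR hkR' (aux7_efword F N hN1 d)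
    (aux7_h1 F N) (aux7_ew F N lam 1 le_rfl hN1) (aux7_kw F N lam 1 le_rfl hN1)
    (aux7_kw' F N lam 1 le_rfl hN1) hc
end

section
/- Let I ∈ S_i, let λ be any weight, and write s_j = (λ,σ_j) + j. The following identities hold in M(λ): (a) for 1 < i ≤ N: e_i f_I H_I v_λ = [(λ,α_i)]_v f_{I₁} f_{I₂} H_I v_λ if i = N, and e_i f_I H_I v_λ = [1 + (λ,α_i)]_v f_{I₁} f_{I₂} H_I v_λ if i < N; (b) for 1 < i ≤ N: e_i f_{I⁺} H_{I⁺} v_λ = q² v^{-s_i} [s_{i-1}]_v f_{I₁} f_{I₂} H_I v_λ if i = N, and e_i f_{I⁺} H_{I⁺} v_λ = v^{-s_i} [s_{i-1}]_v f_{I₁} f_{I₂} H_I v_λ if i < N; (c) for 1 < i < N: e_i f_{I⁻} H_{I⁻} v_λ = -v^{-s_{i-1}} [s_i]_v f_{I₁} f_{I₂} H_I v_λ. -/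
namespace Aux

section rels
variable (F : Type) [Field F] (N : ℕ)

lemma q_ne : qq F ≠ 0 := RatFunc.X_ne_zero

lemma v_ne : vv F ≠ 0 := pow_ne_zero _ (q_ne F)

lemma vv_sub_ne : vv F - (vv F)⁻¹ ≠ 0 := by
  intro h
  have h1 : vv F * vv F = 1 := by
    have := sub_eq_zero.mp h
    nth_rewrite 2 [this]
    exact mul_inv_cancel₀ (v_ne F)
  have h2 : (RatFunc.X : RatFunc F) ^ 4 = 1 := by
    rw [← h1]; unfold vv qq; ring
  have h3 : (Polynomial.X : Polynomial F) ^ 4 = 1 := by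
    apply RatFunc.algebraMap_injective F
    simpa using h2
  have h4 := congrArg Polynomial.natDegree h3
  simp at h4

lemma rel {x y : FreeAlgebra (kk F) (Gen N)} (h : UqRel F N x y) :
    RingQuot.mkAlgHom (kk F) (UqRel F N) x = RingQuot.mkAlgHom (kk F) (UqRel F N) y :=
  RingQuot.mkAlgHom_rel _ h

lemma e_f_comm (i j : ℕ) (h : i ≠ j) : Commute (egen F N i) (fgen F N j) := by
  unfold egen fgen
  split_ifs with h1 h2
  · have := rel F N (UqRel.ef (⟨i - 1, by omega⟩ : Fin N) ⟨j - 1, by omega⟩)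
    rw [if_neg (by simp; omega)] at this
    simp only [map_sub, map_mul, map_zero] at this
    exact sub_eq_zero.mp this
  all_goals simp

lemma e_f_same (i : ℕ) : egen F N i * fgen F N i = fgen F N i * egen F N i +
    (vv F - (vv F)⁻¹)⁻¹ • (kgen F N i ^ 2 - kinvgen F N i ^ 2) := by
  unfold egen fgen kgen kinvgen
  split_ifs with h1
  · have := rel F N (UqRel.ef (⟨i - 1, by omega⟩ : Fin N) ⟨i - 1, by omega⟩)
    rw [if_pos rfl] at this
    simp only [map_sub, map_mul, map_smul, map_pow] at this
    have hq : qq F ^ 2 - qq F ^ (-2 : ℤ) = vv F - (vv F)⁻¹ := by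
      unfold vv; rw [zpow_neg]; rfl
    rw [hq] at this
    rw [← sub_eq_iff_eq_add']
    exact this
  · simp

lemma k_kinv (i : ℕ) (h : 1 ≤ i ∧ i ≤ N) : kgen F N i * kinvgen F N i = 1 := by
  unfold kgen kinvgen
  rw [dif_pos h, dif_pos h]
  simpa [gen] using rel F N (UqRel.kkinv (⟨i - 1, by omega⟩ : Fin N))

lemma kinv_k (i : ℕ) (h : 1 ≤ i ∧ i ≤ N) : kinvgen F N i * kgen F N i = 1 := by
  unfold kgen kinvgen
  rw [dif_pos h, dif_pos h]
  simpa [gen] using rel F N (UqRel.kinvk (⟨i - 1, by omega⟩ : Fin N))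

lemma kf' (i j : ℕ) (h : 1 ≤ i ∧ i ≤ N) : kgen F N i * fgen F N j * kinvgen F N i =
    (qq F ^ (-cartan i j)) • fgen F N j := by
  unfold kgen kinvgen fgen
  rw [dif_pos h, dif_pos h]
  split_ifs with h1
  · have := rel F N (UqRel.kf (⟨i - 1, by omega⟩ : Fin N) ⟨j - 1, by omega⟩)
    simp only [map_mul, map_smul] at this
    rw [show i - 1 + 1 = i by omega, show j - 1 + 1 = j by omega] at this
    exact this
  · simp

lemma ff_comm (i j : ℕ) (h : i + 1 < j) : Commute (fgen F N i) (fgen F N j) := by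
  unfold fgen
  split_ifs with h1 h2
  · have := rel F N (UqRel.serre_f_far (⟨i - 1, by omega⟩ : Fin N) ⟨j - 1, by omega⟩
      (by left; simp; omega))
    simp only [map_mul] at this
    exact this
  all_goals simp

end rels

section weights

/-- abstract weight predicate -/
def W {k A : Type*} [Field k] [Ring A] [Algebra k A] (q : k) (K L : A) (c : ℤ) (x : A) : Prop :=
  K * x = q ^ c • (x * K) ∧ L * x = q ^ (-c) • (x * L)

variable {k A : Type*} [Field k] [Ring A] [Algebra k A] {q : k} {K L : A}

lemma W.one : W q K L 0 (1 : A) := by simp [W]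

lemma W.mul (hq : q ≠ 0) {c d : ℤ} {x y : A} (hx : W q K L c x) (hy : W q K L d y) :
    W q K L (c + d) (x * y) := by
  constructor
  · rw [← mul_assoc, hx.1, smul_mul_assoc, mul_assoc, hy.1, mul_smul_comm, smul_smul,
      zpow_add₀ hq, mul_assoc]
  · rw [← mul_assoc, hx.2, smul_mul_assoc, mul_assoc, hy.2, mul_smul_comm, smul_smul,
      neg_add, zpow_add₀ hq, mul_assoc]

lemma W.sub {c : ℤ} {x y : A} (hx : W q K L c x) (hy : W q K L c y) :
    W q K L c (x - y) := by
  constructor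
  · rw [mul_sub, hx.1, hy.1, sub_mul, smul_sub]
  · rw [mul_sub, hx.2, hy.2, sub_mul, smul_sub]

lemma W.smul {c : ℤ} {x : A} (a : k) (hx : W q K L c x) :
    W q K L c (a • x) := by
  constructor
  · rw [mul_smul_comm, hx.1, smul_mul_assoc, smul_comm]
  · rw [mul_smul_comm, hx.2, smul_mul_assoc, smul_comm]

lemma W.of_conj (hq : q ≠ 0) {c : ℤ} {x : A} (h1 : K * L = 1) (h2 : L * K = 1)
    (h : K * x * L = q ^ c • x) : W q K L c x := by
  have hx : K * x = q ^ c • (x * K) := by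
    have := congrArg (· * K) h
    simp only [mul_assoc, h2, mul_one] at this
    rw [this, smul_mul_assoc]
  refine ⟨hx, ?_⟩
  have h3 : x * L = q ^ c • (L * x) := by
    have := congrArg (L * ·) h
    simp only [← mul_assoc, h2, one_mul] at this
    rw [this, mul_smul_comm]
  rw [h3, smul_smul, ← zpow_add₀ hq]; simp

lemma W.sq {c : ℤ} {x : A} (h : W q K L c x) :
    W (q ^ 2) (K ^ 2) (L ^ 2) c x := by
  constructor
  · rw [pow_two, mul_assoc, h.1, mul_smul_comm, ← mul_assoc, h.1, smul_mul_assoc, smul_smul,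
      mul_assoc, pow_two, mul_zpow]
  · rw [pow_two, mul_assoc, h.2, mul_smul_comm, ← mul_assoc, h.2, smul_mul_assoc, smul_smul,
      mul_assoc, pow_two, mul_zpow]

/-- reassociation of q-brackets -/
lemma reassoc (q : k) (f X g : A) (h : f * g = g * f) :
    q • ((q • (f * X) - q⁻¹ • (X * f)) * g) - q⁻¹ • (g * (q • (f * X) - q⁻¹ • (X * f))) =
    q • (f * (q • (X * g) - q⁻¹ • (g * X))) - q⁻¹ • ((q • (X * g) - q⁻¹ • (g * X)) * f) := by
  have h1 : X * f * g = X * g * f := by rw [mul_assoc, h, mul_assoc]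
  have h2 : g * (f * X) = f * (g * X) := by rw [← mul_assoc, ← h, mul_assoc]
  simp only [mul_sub, sub_mul, smul_mul_assoc, mul_smul_comm, smul_sub, h1, h2, ← mul_assoc] at *
  simp only [h2, smul_smul, mul_comm q⁻¹ q]
  abel

end weights

section words
variable (F : Type) [Field F] (N : ℕ)

/-- squared weight predicate for generators -/
abbrev WW (m : ℕ) (c : ℤ) (x : Uq F N) : Prop :=
  W (vv F) (kgen F N m ^ 2) (kinvgen F N m ^ 2) c x

lemma W_f (m j : ℕ) (h : 1 ≤ m ∧ m ≤ N) : WW F N m (-cartan m j) (fgen F N j) :=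
  (W.of_conj (q_ne F) (k_kinv F N m h) (kinv_k F N m h) (kf' F N m j h)).sq

lemma W_bracket {m : ℕ} {c d : ℤ} {x y : Uq F N} (hx : WW F N m c x) (hy : WW F N m d y) :
    WW F N m (c + d) (qq F • (x * y) - (qq F)⁻¹ • (y * x)) := by
  refine W.sub (W.smul _ (W.mul (v_ne F) hx hy)) (W.smul _ ?_)
  rw [add_comm]
  exact W.mul (v_ne F) hy hx

/-- f_j with j far from m -/
lemma W_word_far (m i d : ℕ) (h : 1 ≤ m ∧ m ≤ N) (h' : m + 1 < i ∨ i + d + 1 < m) :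
    WW F N m 0 (fword F N i d) := by
  induction d with
  | zero =>
    have := W_f F N m i h
    rwa [cartan, if_neg (by omega), if_neg (by omega)] at this
  | succ d ih =>
    have := W_f F N m (i + 1 + d) h
    rw [cartan, if_neg (by omega), if_neg (by omega)] at this
    exact W_bracket F N (ih (by omega)) this

lemma W_word_left (m d : ℕ) (h : 1 ≤ m ∧ m ≤ N) :
    WW F N m 1 (fword F N (m + 1) d) := by
  induction d with
  | zero =>
    have := W_f F N m (m + 1) h
    rwa [cartan, if_neg (by omega), if_pos (by omega)] at this
  | succ d ih =>
    have := W_f F N m (m + 1 + 1 + d) h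
    rw [cartan, if_neg (by omega), if_neg (by omega)] at this
    exact W_bracket F N ih this

lemma W_word_right (i d : ℕ) (h : 1 ≤ i + d + 1 ∧ i + d + 1 ≤ N) :
    WW F N (i + d + 1) 1 (fword F N i d) := by
  have := W_f F N (i + d + 1) (i + d) h
  rw [cartan, if_neg (by omega), if_pos (by omega)] at this
  cases d with
  | zero => exact this
  | succ d =>
    have h3 := W_bracket F N (W_word_far F N (i + (d + 1) + 1) i d h (by omega)) this
    rw [show i + (d + 1) = i + 1 + d by omega] at h3 ⊢
    exact h3

lemma e_word (m i d : ℕ) (h : m < i ∨ i + d < m) :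
    Commute (egen F N m) (fword F N i d) := by
  induction d with
  | zero => exact e_f_comm F N m i (by omega)
  | succ d ih =>
    have h1 := ih (by omega)
    have h2 := e_f_comm F N m (i + 1 + d) (by omega)
    exact ((h1.mul_right h2).smul_right _).sub_right ((h2.mul_right h1).smul_right _)

lemma f_word (m i d : ℕ) (h : m + 1 < i) :
    Commute (fgen F N m) (fword F N i d) := by
  induction d with
  | zero => exact ff_comm F N m i (by omega)
  | succ d ih =>
    have h2 := ff_comm F N m (i + 1 + d) (by omega)
    exact ((ih.mul_right h2).smul_right _).sub_right ((h2.mul_right ih).smul_right _)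

lemma word_left (a d : ℕ) : fword F N a (d + 1) =
    qq F • (fgen F N a * fword F N (a + 1) d) - (qq F)⁻¹ • (fword F N (a + 1) d * fgen F N a) := by
  induction d with
  | zero => rfl
  | succ d ih =>
    have h := ff_comm F N a (a + 1 + (d + 1)) (by omega)
    have h1 := reassoc (qq F) (fgen F N a) (fword F N (a + 1) d) (fgen F N (a + 1 + (d + 1))) h
    rw [← ih] at h1
    have h2 : fword F N (a + 1) (d + 1) =
      qq F • (fword F N (a + 1) d * fgen F N (a + 1 + (d + 1))) -
        (qq F)⁻¹ • (fgen F N (a + 1 + (d + 1)) * fword F N (a + 1) d) := by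
      rw [show a + 1 + (d + 1) = a + 1 + 1 + d by omega]; rfl
    rw [← h2] at h1
    exact h1

end words

section comm
variable {k A : Type*} [Field k] [Ring A] [Algebra k A]

lemma comm_right {q : k} (hq : q ≠ 0) (hv : q ^ 2 - (q ^ 2)⁻¹ ≠ 0) {E f x K L : A}
    (hE : Commute E x)
    (hf : E * f = f * E + (q ^ 2 - (q ^ 2)⁻¹)⁻¹ • (K - L)) (hW : W (q ^ 2) K L 1 x) :
    E * (q • (x * f) - q⁻¹ • (f * x)) = (q • (x * f) - q⁻¹ • (f * x)) * E - q⁻¹ • (x * L) := by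
  have h1 : E * (x * f) = x * f * E + (q ^ 2 - (q ^ 2)⁻¹)⁻¹ • (x * K - x * L) := by
    rw [← mul_assoc, hE.eq, mul_assoc, hf, mul_add, mul_smul_comm, mul_sub, mul_assoc]
  have h2 : E * (f * x) = f * x * E +
      (q ^ 2 - (q ^ 2)⁻¹)⁻¹ • (q ^ 2 • (x * K) - (q ^ 2)⁻¹ • (x * L)) := by
    rw [← mul_assoc, hf, add_mul, mul_assoc, hE.eq, smul_mul_assoc, sub_mul, hW.1, hW.2, mul_assoc]
    simp
  rw [mul_sub, mul_smul_comm, mul_smul_comm, h1, h2, sub_mul, smul_mul_assoc, smul_mul_assoc]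
  have e1 : q * (q ^ 2 - (q ^ 2)⁻¹)⁻¹ - q⁻¹ * ((q ^ 2 - (q ^ 2)⁻¹)⁻¹ * q ^ 2) = 0 := by
    field_simp
    simp
  have e2 : q * (q ^ 2 - (q ^ 2)⁻¹)⁻¹ - q⁻¹ * ((q ^ 2 - (q ^ 2)⁻¹)⁻¹ * (q ^ 2)⁻¹) = q⁻¹ := by
    have : q * (q ^ 2 - (q ^ 2)⁻¹)⁻¹ - q⁻¹ * ((q ^ 2 - (q ^ 2)⁻¹)⁻¹ * (q ^ 2)⁻¹) =
      (q ^ 2 - (q ^ 2)⁻¹)⁻¹ * (q ^ 2 - (q ^ 2)⁻¹) * q⁻¹ := by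
      generalize (q ^ 2 - (q ^ 2)⁻¹)⁻¹ = z
      field_simp
    rw [this, inv_mul_cancel₀ hv, one_mul]
  generalize (q ^ 2 - (q ^ 2)⁻¹)⁻¹ = z at *
  rw [← sub_eq_zero]
  have e3 := congrArg (· • (x * K)) e1
  have e4 := congrArg (· • (x * L)) e2
  simp only [sub_smul, zero_smul] at e3 e4
  rw [← e4, ← sub_eq_zero.mpr e3]
  module

lemma comm_right' {q : k} (hq : q ≠ 0) (hv : q ^ 2 - (q ^ 2)⁻¹ ≠ 0) {E f x K L : A}
    (hE : Commute E x)
    (hf : E * f = f * E + (q ^ 2 - (q ^ 2)⁻¹)⁻¹ • (K - L)) (hW : W (q ^ 2) K L 1 x) :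
    E * (q • (x * f) - q⁻¹ • (f * x)) =
      (q • (x * f) - q⁻¹ • (f * x)) * E + x * ((-q⁻¹) • L) := by
  rw [comm_right hq hv hE hf hW, mul_smul_comm, neg_smul, sub_eq_add_neg]

lemma comm_left {q : k} (hq : q ≠ 0) (hv : q ^ 2 - (q ^ 2)⁻¹ ≠ 0) {E f x K L : A}
    (hE : Commute E x)
    (hf : E * f = f * E + (q ^ 2 - (q ^ 2)⁻¹)⁻¹ • (K - L)) (hW : W (q ^ 2) K L 1 x) :
    E * (q • (f * x) - q⁻¹ • (x * f)) = (q • (f * x) - q⁻¹ • (x * f)) * E + q • (x * K) := by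
  have h1 : E * (x * f) = x * f * E + (q ^ 2 - (q ^ 2)⁻¹)⁻¹ • (x * K - x * L) := by
    rw [← mul_assoc, hE.eq, mul_assoc, hf, mul_add, mul_smul_comm, mul_sub, mul_assoc]
  have h2 : E * (f * x) = f * x * E +
      (q ^ 2 - (q ^ 2)⁻¹)⁻¹ • (q ^ 2 • (x * K) - (q ^ 2)⁻¹ • (x * L)) := by
    rw [← mul_assoc, hf, add_mul, mul_assoc, hE.eq, smul_mul_assoc, sub_mul, hW.1, hW.2, mul_assoc]
    simp
  rw [mul_sub, mul_smul_comm, mul_smul_comm, h1, h2, sub_mul, smul_mul_assoc, smul_mul_assoc]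
  have e1 : q * ((q ^ 2 - (q ^ 2)⁻¹)⁻¹ * (q ^ 2)⁻¹) - q⁻¹ * (q ^ 2 - (q ^ 2)⁻¹)⁻¹ = 0 := by
    generalize (q ^ 2 - (q ^ 2)⁻¹)⁻¹ = z
    field_simp
    simp
  have e2 : q * ((q ^ 2 - (q ^ 2)⁻¹)⁻¹ * q ^ 2) - q⁻¹ * (q ^ 2 - (q ^ 2)⁻¹)⁻¹ = q := by
    have : q * ((q ^ 2 - (q ^ 2)⁻¹)⁻¹ * q ^ 2) - q⁻¹ * (q ^ 2 - (q ^ 2)⁻¹)⁻¹ =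
      (q ^ 2 - (q ^ 2)⁻¹)⁻¹ * (q ^ 2 - (q ^ 2)⁻¹) * q := by
      generalize (q ^ 2 - (q ^ 2)⁻¹)⁻¹ = z
      field_simp
    rw [this, inv_mul_cancel₀ hv, one_mul]
  generalize (q ^ 2 - (q ^ 2)⁻¹)⁻¹ = z at *
  rw [← sub_eq_zero]
  have e3 := congrArg (· • (x * L)) e1
  have e4 := congrArg (· • (x * K)) e2
  simp only [sub_smul, zero_smul] at e3 e4
  rw [← e4, ← neg_eq_zero, ← sub_eq_zero.mpr e3]
  module

end comm

section lists
variable (F : Type) [Field F] (N : ℕ)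

lemma fList_split (l1 : List ℕ) (a : ℕ) (l2 : List ℕ) :
    fList F N (l1 ++ a :: l2) = fList F N (l1 ++ [a]) * fList F N (a :: l2) := by
  induction l1 with
  | nil => simp [fList]
  | cons b l ih =>
    cases l with
    | nil => simp [fList]
    | cons c l =>
      simp only [List.cons_append, fList] at ih ⊢
      rw [ih, mul_assoc]

lemma e_fList (m : ℕ) (l : List ℕ) (hl : l.Pairwise (· < ·))
    (h : (∀ x ∈ l, m < x) ∨ (∀ x ∈ l, x ≤ m)) : Commute (egen F N m) (fList F N l) := by
  induction l with
  | nil => exact Commute.one_right _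
  | cons a l ih =>
    cases l with
    | nil => exact Commute.one_right _
    | cons b l =>
      have hab : a < b := by simp at hl; omega
      refine Commute.mul_right (e_word F N m a _ ?_) (ih hl.of_cons ?_)
      · rcases h with h | h
        · left; exact h a (by simp)
        · right; have := h b (by simp); omega
      · rcases h with h | h
        · left; intro x hx; exact h x (by simp [List.mem_cons.mp hx])
        · right; intro x hx; exact h x (by simp [List.mem_cons.mp hx])

lemma W_fList (m : ℕ) (hm : 1 ≤ m ∧ m ≤ N) (l : List ℕ)
    (h : ∀ x ∈ l, m + 1 < x) : WW F N m 0 (fList F N l) := by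
  induction l with
  | nil => exact W.one
  | cons a l ih =>
    cases l with
    | nil => exact W.one
    | cons b l =>
      have := W.mul (v_ne F) (W_word_far F N m a (b - a - 1) hm (Or.inl (h a (by simp))))
        (ih (fun x hx => h x (by simp [List.mem_cons.mp hx])))
      rw [add_zero] at this
      exact this

lemma sort_eq (S : Finset ℕ) (l : List ℕ) (hl : l.Pairwise (· < ·)) (h : ∀ x, x ∈ S ↔ x ∈ l) :
    S.sort (· ≤ ·) = l := by
  have : S = l.toFinset := by ext x; simp [h]
  subst this
  rw [List.toFinset_sort]
  · exact hl.imp le_of_lt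
  · exact hl.imp ne_of_lt

end lists

section verma
variable (F : Type) [Field F] (N : ℕ) (lam : ℕ → ℤ)


/-- eigenvector predicate -/
def Eig {k A M : Type*} [Field k] [Ring A] [Algebra k A] [AddCommGroup M] [Module A M]
    (w : M) (x : A) (c : k) : Prop := x • w = algebraMap k A c • w

section absEig
variable {k A M : Type*} [Field k] [Ring A] [Algebra k A] [AddCommGroup M] [Module A M] {w : M}

lemma Eig.mul {x y : A} {c d : k} (hx : Eig w x c) (hy : Eig w y d) :
    Eig w (x * y) (c * d) := by
  unfold Eig at *
  rw [mul_smul, hy, smul_smul, ← Algebra.commutes, mul_smul, hx, smul_smul, ← map_mul, mul_comm]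

lemma Eig.sub {x y : A} {c d : k} (hx : Eig w x c) (hy : Eig w y d) :
    Eig w (x - y) (c - d) := by
  unfold Eig at *
  rw [sub_smul, hy, hx, map_sub, sub_smul]

lemma Eig.smul {x : A} {c : k} (a : k) (hx : Eig w x c) :
    Eig w (a • x) (a * c) := by
  unfold Eig at *
  rw [Algebra.smul_def, mul_smul, hx, smul_smul, ← map_mul]

lemma Eig.one : Eig w (1 : A) (1 : k) := by
  unfold Eig; rw [map_one]

lemma Eig.sq {x : A} {c : k} (hx : Eig w x c) : Eig w (x ^ 2) (c ^ 2) := by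
  rw [pow_two, pow_two]; exact hx.mul hx

lemma Eig.inv {x y : A} {c d : k} (hx : Eig w x c) (h : y * x = 1) (hd : d * c = 1) :
    Eig w y d := by
  unfold Eig at *
  have h1 : y • x • w = w := by rw [smul_smul, h, one_smul]
  rw [hx, smul_smul, ← Algebra.commutes, mul_smul] at h1
  nth_rewrite 2 [← h1]
  rw [smul_smul, ← map_mul, hd, map_one, one_smul]

/-- Final packaging of the action on the highest weight vector. -/
lemma final {X Y Z E H H' : A} {c c' h h' : k}
    (hE : E • w = 0) (hX : E * X = X * E + Y * Z) (hZ : Eig w Z c)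
    (hH : Eig w H h) (hH' : Eig w H' h') (hc : c * h = c' * h') :
    E • ((X * H) • w) = (c' • (Y * H')) • w := by
  have e1 : E • ((X * H) • w) = (Y * (Z * H)) • w := by
    rw [mul_smul X, hH, smul_smul, smul_smul, ← mul_assoc, hX, ← Algebra.commutes, mul_smul,
      add_smul, mul_smul X, hE, smul_zero, zero_add, ← mul_smul, Algebra.commutes, mul_smul, ← hH,
      ← mul_smul, mul_assoc]
  have e2 : (c' • (Y * H')) • w = (Y * (c' • H')) • w := by rw [mul_smul_comm]
  have e3 : (Z * H) • w = (c' • H') • w := by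
    have h3 := hZ.mul hH
    have h4 := hH'.smul c'
    unfold Eig at h3 h4
    rw [h3, h4, hc]
  rw [e1, e2, mul_smul, mul_smul Y, e3]

end absEig

lemma smul_hw_eq {x : Uq F N} {c : kk F}
    (h : x - algebraMap (kk F) (Uq F N) c ∈ vermaIdeal F N lam) :
    Eig (hw F N lam) x c := by
  unfold Eig hw
  rw [← Submodule.Quotient.mk_smul, ← Submodule.Quotient.mk_smul, smul_eq_mul, smul_eq_mul,
    mul_one, mul_one]
  exact (Submodule.Quotient.eq _).mpr h

lemma e_hw (j : ℕ) (h : 1 ≤ j ∧ j ≤ N) : egen F N j • hw F N lam = 0 := by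
  have := smul_hw_eq F N lam (x := egen F N j) (c := 0) (by
    rw [map_zero, sub_zero]
    exact Submodule.subset_span (Or.inl ⟨j, h.1, h.2, rfl⟩))
  unfold Eig at this
  rw [this, map_zero, zero_smul]

variable {F N lam}

lemma Eig.k (j : ℕ) (h : 1 ≤ j ∧ j ≤ N) : Eig (hw F N lam) (kgen F N j) (qq F ^ lam j) :=
  smul_hw_eq F N lam (Submodule.subset_span (Or.inr ⟨j, h.1, h.2, rfl⟩))

lemma Eig.kinv (j : ℕ) (h : 1 ≤ j ∧ j ≤ N) :
    Eig (hw F N lam) (kinvgen F N j) (qq F ^ (-lam j)) :=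
  (Eig.k j h).inv (kinv_k F N j h) (by rw [← zpow_add₀ (q_ne F)]; simp)

lemma pairσ_succ (i : ℕ) : pairσ lam (i + 1) = pairσ lam i + lam (i + 1) := by
  unfold pairσ
  rw [Finset.sum_Icc_succ_top (by omega)]

lemma Eig.kσ (i : ℕ) (h : i ≤ N) : Eig (hw F N lam) (kσ F N i) (qq F ^ pairσ lam i) := by
  induction i with
  | zero => simpa [_root_.kσ, pairσ] using Eig.one
  | succ i ih =>
    have := (ih (by omega)).mul (Eig.k (F := F) (lam := lam) (i + 1) (by omega : _ ∧ _ ≤ N))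
    rw [← zpow_add₀ (q_ne F), ← pairσ_succ] at this
    simpa [_root_.kσ, List.range_succ] using this

lemma Eig.kσinv (i : ℕ) (h : i ≤ N) : Eig (hw F N lam) (kσinv F N i) (qq F ^ (-pairσ lam i)) := by
  induction i with
  | zero => simpa [_root_.kσinv, pairσ] using Eig.one
  | succ i ih =>
    have := (ih (by omega)).mul (Eig.kinv (F := F) (lam := lam) (i + 1) (by omega : _ ∧ _ ≤ N))
    rw [← zpow_add₀ (q_ne F), ← neg_add, ← pairσ_succ] at this
    simpa [_root_.kσinv, List.range_succ] using this

lemma qv (n : ℤ) : (qq F ^ n) ^ 2 = vv F ^ n := by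
  unfold vv
  rw [pow_two, pow_two, mul_zpow]

lemma Eig.h (i : ℕ) (h : i ≤ N) : Eig (hw F N lam) (hElt F N i) (hval F lam i) := by
  have h1 := (Eig.kσ (F := F) (lam := lam) i h).sq
  have h2 := (Eig.kσinv (F := F) (lam := lam) i h).sq
  rw [qv] at h1 h2
  have h3 := ((h2.mul ((h1.smul (vv F ^ (i : ℤ))).sub (h2.smul (vv F ^ (-(i : ℤ))))))).smul
    (-(qq F)⁻¹ * vv F ^ (1 - (i : ℤ)) * (vv F - (vv F)⁻¹)⁻¹)
  suffices hv : hval F lam i = _ by rw [hv]; exact h3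
  unfold hval qint
  rw [← zpow_add₀ (v_ne F), ← zpow_add₀ (v_ne F)]
  have e1 : vv F ^ (-(pairσ lam i + (i : ℤ) - 1)) =
      vv F ^ (1 - (i : ℤ)) * vv F ^ (-pairσ lam i) := by
    rw [← zpow_add₀ (v_ne F)]; congr 1; ring
  rw [e1, show pairσ lam i + (i : ℤ) = i + pairσ lam i by ring, neg_add]
  ring

lemma Eig.list (l : List ℕ) (h : ∀ x ∈ l, x ≤ N) :
    Eig (hw F N lam) ((l.map (hElt F N)).prod) ((l.map (hval F lam)).prod) := by
  induction l with
  | nil => simpa using Eig.one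
  | cons a l ih =>
    simp only [List.map_cons, List.prod_cons]
    exact (Eig.h a (h a (by simp))).mul (ih (fun x hx => h x (by simp [hx])))

lemma Eig.HI (I : Finset ℕ) : Eig (hw F N lam) (HI F N I) (HIval F N lam I) := by
  have := Eig.list (F := F) (N := N) (lam := lam) ((rSet N I).sort (· ≤ ·)) (by
    intro x hx
    rw [Finset.mem_sort] at hx
    simp only [rSet, Finset.mem_image, Finset.mem_sdiff, Finset.mem_Icc] at hx
    obtain ⟨y, hy, rfl⟩ := hx
    omega)
  unfold HIval
  rw [← Finset.prod_map_toList]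
  have hp : ((rSet N I).toList.map (hval F lam)).prod =
      (((rSet N I).sort (· ≤ ·)).map (hval F lam)).prod :=
    ((Finset.sort_perm_toList _ _).symm.map _).prod_eq
  rw [hp]
  exact this

lemma HIval_erase (I : Finset ℕ) (j : ℕ) (hj : j + 1 ∈ I) (hjN : j ≤ N) (h0 : 1 ≤ j) :
    HIval F N lam (I.erase (j + 1)) = hval F lam j * HIval F N lam I := by
  have : rSet N (I.erase (j + 1)) = insert j (rSet N I) := by
    ext x
    simp only [rSet, Finset.mem_insert, Finset.mem_image, Finset.mem_sdiff, Finset.mem_Icc,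
      Finset.mem_erase]
    constructor
    · rintro ⟨y, ⟨hy, hy'⟩, rfl⟩
      by_cases hyj : y = j + 1
      · left; omega
      · right; exact ⟨y, ⟨hy, fun h => hy' ⟨hyj, h⟩⟩, rfl⟩
    · rintro (rfl | ⟨y, ⟨hy, hy'⟩, rfl⟩)
      · exact ⟨x + 1, ⟨by omega, by simp⟩, by omega⟩
      · exact ⟨y, ⟨hy, fun h => hy' h.2⟩, rfl⟩
  unfold HIval
  rw [this, Finset.prod_insert]
  simp only [rSet, Finset.mem_image, Finset.mem_sdiff, Finset.mem_Icc]
  rintro ⟨y, ⟨hy, hy'⟩, rfl⟩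
  apply hy'
  rwa [Nat.sub_add_cancel hy.1] at hj

end verma

section main

lemma push {A : Type*} [Ring A] {E P g y T B Z : A} (hP : Commute E P) (hB : Commute E B)
    (hg : E * g = g * E + y * T) (hT : T * B = B * Z) :
    E * (P * g * B) = P * g * B * E + P * y * B * Z := by
  calc E * (P * g * B) = (E * P) * g * B := by simp only [mul_assoc]
    _ = P * (E * g) * B := by rw [hP.eq]; simp only [mul_assoc]
    _ = P * g * (E * B) + P * y * (T * B) := by rw [hg]; simp only [mul_assoc, mul_add, add_mul]
    _ = _ := by rw [hB.eq, hT]; simp only [mul_assoc]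

variable {F : Type} [Field F] {N : ℕ}

lemma ef_word_right (a i : ℕ) (hai : a < i) (hi : 1 ≤ i ∧ i ≤ N) :
    egen F N i * fij F N a (i + 1) = fij F N a (i + 1) * egen F N i +
      fij F N a i * ((-(qq F)⁻¹) • kinvgen F N i ^ 2) := by
  obtain ⟨d, rfl⟩ : ∃ d, i = a + d + 1 := ⟨i - a - 1, by omega⟩
  have e1 : fij F N a (a + d + 1) = fword F N a d := by
    unfold fij; congr 1; omega
  have e2 : fij F N a (a + d + 1 + 1) = fword F N a (d + 1) := by
    unfold fij; congr 1; omega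
  have e3 : fword F N a (d + 1) = qq F • (fword F N a d * fgen F N (a + d + 1)) -
        (qq F)⁻¹ • (fgen F N (a + d + 1) * fword F N a d) := by
    rw [show a + d + 1 = a + 1 + d by omega]; rfl
  have := comm_right' (q_ne F) (vv_sub_ne F) (e_word F N (a + d + 1) a d (by omega))
    (e_f_same F N (a + d + 1)) (W_word_right F N a d hi)
  rw [← e3] at this
  rw [e1, e2, this]

lemma ef_word_left (b i : ℕ) (hb : i + 1 < b) (hi : 1 ≤ i ∧ i ≤ N) :
    egen F N i * fij F N i b = fij F N i b * egen F N i +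
      fij F N (i + 1) b * (qq F • kgen F N i ^ 2) := by
  obtain ⟨d, rfl⟩ : ∃ d, b = i + d + 2 := ⟨b - i - 2, by omega⟩
  have e1 : fij F N (i + 1) (i + d + 2) = fword F N (i + 1) d := by
    unfold fij; congr 1; omega
  have e2 : fij F N i (i + d + 2) = fword F N i (d + 1) := by
    unfold fij; congr 1; omega
  have := comm_left (q_ne F) (vv_sub_ne F) (e_word F N i (i + 1) d (by omega))
    (e_f_same F N i) (W_word_left F N i d hi)
  rw [← word_left] at this
  rw [e1, e2, this, mul_smul_comm]

variable {lam : ℕ → ℤ} {i : ℕ} {I : Finset ℕ} {L R : List ℕ}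

lemma hval_zpow (j : ℕ) : hval F lam j =
    -(qq F)⁻¹ * vv F ^ (-(pairσ lam j + (j : ℤ)) + 1) * qint F (pairσ lam j + (j : ℤ)) := by
  unfold hval; congr 3; ring

lemma qinv_sq : (qq F)⁻¹ * (qq F)⁻¹ = (vv F) ^ (-1 : ℤ) := by
  unfold vv; rw [zpow_neg_one, pow_two, mul_inv]

lemma part_a (hi : 1 ≤ i ∧ i ≤ N) {m : ℤ} {A B : Uq F N} (hA : Commute (egen F N i) A)
    (hB : Commute (egen F N i) B) (hW : WW F N i m B) :
    egen F N i • ((A * fgen F N i * B * HI F N I) • hw F N lam) =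
      (qint F (m + lam i) • (A * B * HI F N I)) • hw F N lam := by
  have hK := (Eig.k (F := F) (lam := lam) i hi).sq
  have hL := (Eig.kinv (F := F) (lam := lam) i hi).sq
  rw [qv] at hK hL
  have hg := e_f_same F N i
  rw [← one_mul (_ • _)] at hg
  have := push hA hB hg (Z := (vv F - (vv F)⁻¹)⁻¹ • (vv F ^ m • kgen F N i ^ 2
      - vv F ^ (-m) • kinvgen F N i ^ 2)) (by
    rw [smul_mul_assoc, sub_mul, hW.1, hW.2, mul_smul_comm, mul_sub, mul_smul_comm, mul_smul_comm])
  rw [mul_one A] at this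
  refine final (e_hw F N lam i hi) this (((hK.smul _).sub (hL.smul _)).smul _) (Eig.HI I)
    (Eig.HI I) ?_
  unfold qint
  rw [← zpow_add₀ (v_ne F), ← zpow_add₀ (v_ne F), ← neg_add]
  ring

lemma part_b (hi : 1 < i ∧ i ≤ N) {m : ℤ} {P B : Uq F N} {a : ℕ} (ha : a < i) (hiI : i ∈ I)
    (hP : Commute (egen F N i) P)
    (hB : Commute (egen F N i) B) (hW : WW F N i m B) :
    egen F N i • ((P * fij F N a (i + 1) * B * HI F N (I.erase i)) • hw F N lam) =
      ((vv F ^ (-(pairσ lam i + (i : ℤ)) + 1 - m) *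
        qint F (pairσ lam (i - 1) + ((i - 1 : ℕ) : ℤ))) •
        (P * fij F N a i * B * HI F N I)) • hw F N lam := by
  have hi' : 1 ≤ i ∧ i ≤ N := ⟨hi.1.le, hi.2⟩
  have hL := (Eig.kinv (F := F) (lam := lam) i hi').sq
  rw [qv] at hL
  have := push hP hB (ef_word_right a i ha hi') (Z := (-(qq F)⁻¹ * vv F ^ (-m)) • kinvgen F N i ^ 2)
    (by rw [smul_mul_assoc, hW.2, smul_smul, mul_smul_comm])
  refine final (e_hw F N lam i hi') this (hL.smul _) (Eig.HI _) (Eig.HI I) ?_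
  obtain ⟨j, rfl⟩ : ∃ j, i = j + 1 := ⟨i - 1, by omega⟩
  rw [HIval_erase I j hiI (by omega) (by omega), hval_zpow, pairσ_succ, Nat.add_sub_cancel]
  have e : vv F ^ (-(pairσ lam j + lam (j + 1) + ((j + 1 : ℕ) : ℤ)) + 1 - m) =
      ((qq F)⁻¹ * (qq F)⁻¹) * vv F ^ (-m) * vv F ^ (-lam (j + 1)) *
        vv F ^ (-(pairσ lam j + (j : ℤ)) + 1) := by
    rw [qinv_sq, ← zpow_add₀ (v_ne F), ← zpow_add₀ (v_ne F), ← zpow_add₀ (v_ne F)]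
    congr 1; push_cast; ring
  rw [e]
  ring

lemma part_c (hi : 1 < i ∧ i ≤ N) {A C : Uq F N} {b : ℕ} (hb : i + 1 < b) (hiI : i + 1 ∈ I)
    (hA : Commute (egen F N i) A)
    (hC : Commute (egen F N i) C) (hW : WW F N i 0 C) :
    egen F N i • ((A * fij F N i b * C * HI F N (I.erase (i + 1))) • hw F N lam) =
      ((-(vv F ^ (-(pairσ lam (i - 1) + ((i - 1 : ℕ) : ℤ))) * qint F (pairσ lam i + (i : ℤ)))) •
        (A * fij F N (i + 1) b * C * HI F N I)) • hw F N lam := by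
  have hi' : 1 ≤ i ∧ i ≤ N := ⟨hi.1.le, hi.2⟩
  have hK := (Eig.k (F := F) (lam := lam) i hi').sq
  rw [qv] at hK
  have := push hA hC (ef_word_left b i hb hi') (Z := qq F • kgen F N i ^ 2)
    (by rw [smul_mul_assoc, hW.1, zpow_zero, one_smul, mul_smul_comm])
  refine final (e_hw F N lam i hi') this (hK.smul _) (Eig.HI _) (Eig.HI I) ?_
  rw [HIval_erase I i hiI (by omega) (by omega), hval_zpow]
  obtain ⟨j, rfl⟩ : ∃ j, i = j + 1 := ⟨i - 1, by omega⟩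
  rw [pairσ_succ, Nat.add_sub_cancel]
  have e : vv F ^ (-(pairσ lam j + (j : ℤ))) = (qq F * (qq F)⁻¹) * vv F ^ (lam (j + 1)) *
      vv F ^ (-(pairσ lam j + lam (j + 1) + ((j + 1 : ℕ) : ℤ)) + 1) := by
    rw [mul_inv_cancel₀ (q_ne F), one_mul, ← zpow_add₀ (v_ne F)]
    congr 1; push_cast; ring
  rw [e]
  ring

end main

end Aux

open Aux

/-- for `I ∈ S_i`, any weight `λ`, and `s_j = (λ,σ_j)+j`:
(a) for `1 < i ≤ N`, `e_i f_I H_I v_λ = [(λ,α_i)]_v f_{I₁}f_{I₂}H_I v_λ` if `i = N`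
and `= [1+(λ,α_i)]_v f_{I₁}f_{I₂}H_I v_λ` if `i < N`;
(b) for `1 < i ≤ N`, `e_i f_{I⁺} H_{I⁺} v_λ = q² v^{-s_i}[s_{i-1}]_v f_{I₁}f_{I₂}H_I v_λ`
if `i = N` and `= v^{-s_i}[s_{i-1}]_v f_{I₁}f_{I₂}H_I v_λ` if `i < N`;
(c) for `1 < i < N`, `e_i f_{I⁻} H_{I⁻} v_λ = -v^{-s_{i-1}}[s_i]_v f_{I₁}f_{I₂}H_I v_λ`. -/
theorem stmt8 (F : Type) [Field F] (N : ℕ) (lam : ℕ → ℤ) (i : ℕ)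
    (h1 : 1 < i) (h2 : i ≤ N) (I : Finset ℕ) (hI : I ∈ II N)
    (hiI : i ∈ I) (hi1I : i + 1 ∈ I) :
    let s : ℕ → ℤ := fun j => pairσ lam j + (j : ℤ)
    let I₁ : Finset ℕ := I.filter (· ≤ i)
    let I₂ : Finset ℕ := I.filter fun x => i + 1 ≤ x
    ((i = N →
      egen F N i • ((fSet F N I * HI F N I) • hw F N lam) =
        (qint F (lam i) • (fSet F N I₁ * fSet F N I₂ * HI F N I)) • hw F N lam) ∧
    (i < N →
      egen F N i • ((fSet F N I * HI F N I) • hw F N lam) =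
        (qint F (1 + lam i) • (fSet F N I₁ * fSet F N I₂ * HI F N I)) • hw F N lam) ∧
    (i = N →
      egen F N i • ((fSet F N (I.erase i) * HI F N (I.erase i)) • hw F N lam) =
        ((qq F ^ 2 * vv F ^ (-(s i)) * qint F (s (i - 1))) •
          (fSet F N I₁ * fSet F N I₂ * HI F N I)) • hw F N lam) ∧
    (i < N →
      egen F N i • ((fSet F N (I.erase i) * HI F N (I.erase i)) • hw F N lam) =
        ((vv F ^ (-(s i)) * qint F (s (i - 1))) •
          (fSet F N I₁ * fSet F N I₂ * HI F N I)) • hw F N lam) ∧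
    (i < N →
      egen F N i • ((fSet F N (I.erase (i + 1)) * HI F N (I.erase (i + 1))) • hw F N lam) =
        ((-(vv F ^ (-(s (i - 1))) * qint F (s i))) •
          (fSet F N I₁ * fSet F N I₂ * HI F N I)) • hw F N lam)) := by
  intro s I₁ I₂
  have hi : 1 ≤ i ∧ i ≤ N := ⟨h1.le, h2⟩
  simp only [II, Finset.mem_filter, Finset.mem_powerset] at hI
  obtain ⟨hsub, h1I, hNI⟩ := hI
  have hle : ∀ x ∈ I, x ≤ N + 1 := fun x hx => (Finset.mem_Icc.mp (hsub hx)).2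
  obtain ⟨L, hL, hLs⟩ : ∃ L : List ℕ, (∀ x, x ∈ L ↔ x ∈ I ∧ x < i) ∧ L.Pairwise (· < ·) :=
    ⟨(I.filter (· < i)).sort (· ≤ ·), by simp, (Finset.sortedLT_sort _).pairwise⟩
  obtain ⟨R, hR, hRs⟩ : ∃ R : List ℕ, (∀ x, x ∈ R ↔ x ∈ I ∧ i + 1 < x) ∧ R.Pairwise (· < ·) :=
    ⟨(I.filter (i + 1 < ·)).sort (· ≤ ·), by simp, (Finset.sortedLT_sort _).pairwise⟩
  have s0 : I.sort (· ≤ ·) = L ++ i :: (i + 1) :: R := by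
    apply sort_eq
    · simp only [List.pairwise_append, List.pairwise_cons, List.mem_cons, hL, hR]
      refine ⟨hLs, ⟨?_, ?_, hRs⟩, ?_⟩ <;> grind
    · intro x; simp only [List.mem_append, List.mem_cons, hL, hR]; grind
  have s1 : I₁.sort (· ≤ ·) = L ++ [i] := by
    apply sort_eq
    · simp only [List.pairwise_append, List.mem_cons, hL]
      refine ⟨hLs, by simp, ?_⟩ ; grind
    · intro x; simp only [I₁, Finset.mem_filter, List.mem_append, List.mem_cons, hL]; grind
  have s2 : I₂.sort (· ≤ ·) = (i + 1) :: R := by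
    apply sort_eq
    · simp only [List.pairwise_cons, hR]
      refine ⟨?_, hRs⟩ ; grind
    · intro x; simp only [I₂, Finset.mem_filter, List.mem_cons, hR]; grind
  have s3 : (I.erase i).sort (· ≤ ·) = L ++ (i + 1) :: R := by
    apply sort_eq
    · simp only [List.pairwise_append, List.pairwise_cons, List.mem_cons, hL, hR]
      refine ⟨hLs, ⟨?_, hRs⟩, ?_⟩ <;> grind
    · intro x; simp only [Finset.mem_erase, List.mem_append, List.mem_cons, hL, hR]; grind
  have s4 : (I.erase (i + 1)).sort (· ≤ ·) = L ++ i :: R := by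
    apply sort_eq
    · simp only [List.pairwise_append, List.pairwise_cons, List.mem_cons, hL, hR]
      refine ⟨hLs, ⟨?_, hRs⟩, ?_⟩ <;> grind
    · intro x; simp only [Finset.mem_erase, List.mem_append, List.mem_cons, hL, hR]; grind
  have p1 : (L ++ [i]).Pairwise (· < ·) := s1 ▸ (Finset.sortedLT_sort _).pairwise
  have p2 : ((i + 1) :: R).Pairwise (· < ·) := s2 ▸ (Finset.sortedLT_sort _).pairwise
  have cA : Commute (egen F N i) (fList F N (L ++ [i])) := e_fList F N i _ p1
    (Or.inr (by intro x; simp only [List.mem_append, List.mem_cons, hL]; grind))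
  have cB : Commute (egen F N i) (fList F N ((i + 1) :: R)) := e_fList F N i _ p2
    (Or.inl (by intro x; simp only [List.mem_cons, hR]; grind))
  have cR : Commute (egen F N i) (fList F N R) := e_fList F N i _ hRs
    (Or.inl (by intro x; simp only [hR]; grind))
  have wR : WW F N i 0 (fList F N R) := W_fList F N i hi R (by intro x; simp only [hR]; grind)
  -- the last entry of `L`
  obtain ⟨P, a, rfl⟩ : ∃ P a, L = P ++ [a] := by
    rcases List.eq_nil_or_concat L with h | ⟨P, a, h⟩
    · have := (hL 1).mpr ⟨h1I, h1⟩
      simp [h] at this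
    · exact ⟨P, a, by simpa using h⟩
  have hai : a < i := ((hL a).mp (by simp)).2
  have cP : Commute (egen F N i) (fList F N (P ++ [a])) := e_fList F N i _ hLs
    (Or.inr (by intro x; rw [hL]; grind))
  have fA : fList F N (P ++ [a] ++ [i]) = fList F N (P ++ [a]) * fij F N a i := by
    rw [List.append_assoc, List.singleton_append, fList_split]
    simp [fList]
  have f0 : fSet F N I = fList F N (P ++ [a] ++ [i]) * fgen F N i * fList F N ((i + 1) :: R) := by
    unfold fSet
    rw [s0, fList_split, mul_assoc]
    have : fij F N i (i + 1) = fgen F N i := by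
      unfold fij; rw [show i + 1 - i - 1 = 0 by omega]; rfl
    rw [fList, this]
  have f1 : fSet F N I₁ = fList F N (P ++ [a] ++ [i]) := by unfold fSet; rw [s1]
  have f2 : fSet F N I₂ = fList F N ((i + 1) :: R) := by unfold fSet; rw [s2]
  have f3 : fSet F N (I.erase i) =
      fList F N (P ++ [a]) * fij F N a (i + 1) * fList F N ((i + 1) :: R) := by
    unfold fSet
    rw [s3, List.append_assoc, List.singleton_append, fList_split, mul_assoc, fList]
  have w0 : i = N → WW F N i 0 (fList F N ((i + 1) :: R)) := by
    intro hN
    have : R = [] := by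
      apply List.eq_nil_iff_forall_not_mem.mpr
      intro x hx
      have := (hR x).mp hx
      have := hle x this.1
      omega
    rw [this]
    exact W.one
  have hRne : i < N → ∃ b R', R = b :: R' ∧ i + 1 < b := by
    intro hN
    rcases R with _ | ⟨b, R'⟩
    · have := (hR (N + 1)).mpr ⟨hNI, by omega⟩
      simp at this
    · exact ⟨b, R', rfl, ((hR b).mp (by simp)).2⟩
  have w1 : i < N → WW F N i 1 (fList F N ((i + 1) :: R)) := by
    intro hN
    obtain ⟨b, R', rfl, hb⟩ := hRne hN
    have := W.mul (v_ne F) (W_word_left F N i (b - (i + 1) - 1) hi) wR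
    rw [add_zero] at this
    exact this
  refine ⟨?_, ?_, ?_, ?_, ?_⟩
  · intro hN
    have := part_a (lam := lam) (I := I) hi cA cB (w0 hN)
    rw [zero_add] at this
    rw [f0, f1, f2]; exact this
  · intro hN
    rw [f0, f1, f2]; exact part_a (lam := lam) (I := I) hi cA cB (w1 hN)
  · intro hN
    have := part_b (lam := lam) (I := I) ⟨h1, h2⟩ hai hiI cP cB (w0 hN)
    have e : qq F ^ 2 * vv F ^ (-(s i)) = vv F ^ (-(pairσ lam i + (i : ℤ)) + 1 - 0) := by
      rw [sub_zero, zpow_add₀ (v_ne F), zpow_one, mul_comm]; rfl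
    rw [f3, f1, f2, fA, e]; exact this
  · intro hN
    have := part_b (lam := lam) (I := I) ⟨h1, h2⟩ hai hiI cP cB (w1 hN)
    rw [add_sub_cancel_right] at this
    rw [f3, f1, f2, fA]; exact this
  · intro hN
    obtain ⟨b, R', rfl, hb⟩ := hRne hN
    have := part_c (lam := lam) (I := I) ⟨h1, h2⟩ hb hi1I cA cR wR
    have f4 : fSet F N (I.erase (i + 1)) =
        fList F N (P ++ [a] ++ [i]) * fij F N i b * fList F N (b :: R') := by
      unfold fSet
      rw [s4, fList_split, mul_assoc, fList]
    have f5 : fList F N (P ++ [a] ++ [i]) * fList F N ((i + 1) :: b :: R') =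
        fList F N (P ++ [a] ++ [i]) * fij F N (i + 1) b * fList F N (b :: R') := by
      rw [mul_assoc, fList]
    rw [f4, f1, f2, f5]; exact this
end
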